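/- arXiv:0903.1436 — 3 statements merged into one kernel-verified Lean document; each statement's English description precedes it below -/
import Mathlib

section
/- Let n ≥ 1 and let m be a positive integer with m > (n+2)/4. Then there exists a constant C = C(m,n) > 0 such that for every Schwartz function u on ℝ^{n+1}, ‖u‖_{F̃⁰_{∞,1}} ≤ C (1 + ‖u‖_{F̃⁰_{∞,2}} (1 + (log⁺ ‖u‖_{W₂^{2m,m}(ℝ^{n+1})})^{1/2})). -/
open MeasureTheory Real
open scoped FourierTransform ENNReal

noncomputable section

/-- The model space for `ℝ^{n+1}`: generic point `z = (x, t)` where the spatial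
coordinates are `x i = z i.castSucc` (`i : Fin n`) and the time coordinate is
`t = z (Fin.last n)`. -/
abbrev PSpace (n : ℕ) := EuclideanSpace ℝ (Fin (n + 1))

/-- The parabolic distance `‖z‖ₚ = max (maxᵢ |xᵢ|) √|t|` from `z` to the origin. -/
def pnorm {n : ℕ} (z : PSpace n) : ℝ :=
  max (⨆ i : Fin n, |z i.castSucc|) (Real.sqrt |z (Fin.last n)|)

/-- The parabolic cube of radius `r` centered at `z₀`. -/
def pCube {n : ℕ} (z₀ : PSpace n) (r : ℝ) : Set (PSpace n) :=
  {z | pnorm (z - z₀) < r}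

/-- The set of mean oscillations `⨍_Q |u - u_Q|` of `u` over parabolic cubes `Q ⊆ O`. -/
def oscSet {n : ℕ} (O : Set (PSpace n)) (u : PSpace n → ℝ) : Set ℝ :=
  {v | ∃ z₀ r, 0 < r ∧ pCube z₀ r ⊆ O ∧
    v = ⨍ z in pCube z₀ r, |u z - ⨍ w in pCube z₀ r, u w|}

/-- The parabolic BMO norm of `u` over `O`. -/
def pBMO {n : ℕ} (O : Set (PSpace n)) (u : PSpace n → ℝ) : ℝ := sSup (oscSet O u)

/-- The set of quantities `inf_c ⨍_Q |u - c|` over parabolic cubes `Q ⊆ O`. -/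
def infOscSet {n : ℕ} (O : Set (PSpace n)) (u : PSpace n → ℝ) : Set ℝ :=
  {v | ∃ z₀ r, 0 < r ∧ pCube z₀ r ⊆ O ∧
    v = ⨅ c : ℝ, ⨍ z in pCube z₀ r, |u z - c|}

/-- Time derivative `D_t u`. -/
def Dt {n : ℕ} (u : PSpace n → ℝ) : PSpace n → ℝ :=
  fun z => fderiv ℝ u z (EuclideanSpace.single (Fin.last n) 1)

/-- Spatial derivative in direction `i`. -/
def Dx {n : ℕ} (i : Fin n) (u : PSpace n → ℝ) : PSpace n → ℝ :=
  fun z => fderiv ℝ u z (EuclideanSpace.single i.castSucc 1)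

/-- Spatial derivative `D_x^α` for a multi-index `α`. -/
def DxPow {n : ℕ} (α : Fin n → ℕ) (u : PSpace n → ℝ) : PSpace n → ℝ :=
  (List.finRange n).foldr (fun i v => (Dx i)^[α i] v) u

/-- The mixed derivative `D_t^r D_x^α u`. -/
def mixDeriv {n : ℕ} (r : ℕ) (α : Fin n → ℕ) (u : PSpace n → ℝ) : PSpace n → ℝ :=
  Dt^[r] (DxPow α u)

/-- The `L²(O)` norm. -/
def L2norm {n : ℕ} (O : Set (PSpace n)) (v : PSpace n → ℝ) : ℝ :=
  (eLpNorm v 2 (volume.restrict O)).toReal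

/-- The parabolic Sobolev norm `‖u‖_{W₂^{2m,m}(O)} = Σ_{2r+s ≤ 2m} Σ_{|α| = s}
‖D_t^r D_x^α u‖_{L²(O)}`. -/
def sobNorm {n : ℕ} (m : ℕ) (O : Set (PSpace n)) (u : PSpace n → ℝ) : ℝ :=
  ∑ p ∈ (Finset.range (2 * m + 1) ×ˢ Finset.range (2 * m + 1)).filter
      (fun p => 2 * p.1 + p.2 ≤ 2 * m),
    ∑ α ∈ Finset.Nat.antidiagonalTuple n p.2, L2norm O (mixDeriv p.1 α u)

/-- `log⁺ x = max (log x) 0`. -/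
def logPlus (x : ℝ) : ℝ := max (Real.log x) 0

/-- The domain `Ω_T = (0,1)ⁿ × (0,T)`. -/
def OmegaT (n : ℕ) (T : ℝ) : Set (PSpace n) :=
  {z | (∀ i : Fin n, z i.castSucc ∈ Set.Ioo (0 : ℝ) 1) ∧ z (Fin.last n) ∈ Set.Ioo 0 T}

/-- The anisotropic dilation `η^a z = (η x, η² t)` with `a = (1,…,1,2)`. -/
def pdil {n : ℕ} (η : ℝ) (z : PSpace n) : PSpace n :=
  (EuclideanSpace.equiv (Fin (n + 1)) ℝ).symm
    (fun i => if i = Fin.last n then η ^ 2 * z i else η * z i)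

/-- The anisotropic dyadic partition of unity `ψ_j` built from `ψ₀`:
`ψ_j z = ψ₀ (2^{-ja} z) - ψ₀ (2^{-(j-1)a} z)` for `j ≥ 1`. -/
def psiJ {n : ℕ} (ψ₀ : PSpace n → ℝ) : ℕ → PSpace n → ℝ
  | 0 => ψ₀
  | (j + 1) => fun z =>
      ψ₀ (pdil ((2 : ℝ) ^ (-((j : ℝ) + 1))) z) - ψ₀ (pdil ((2 : ℝ) ^ (-(j : ℝ))) z)

/-- `φ_j = 𝓕⁻¹ ψ_j`, the inverse Fourier transform of `ψ_j`. -/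
def phiJ {n : ℕ} (ψ₀ : PSpace n → ℝ) (j : ℕ) : PSpace n → ℂ :=
  𝓕⁻ (fun z => ((psiJ ψ₀ j z : ℝ) : ℂ))

/-- The convolution `(φ * u) z = ∫ φ (z - w) u w dw`. -/
def pconv {n : ℕ} (φ : PSpace n → ℂ) (u : PSpace n → ℝ) (z : PSpace n) : ℂ :=
  ∫ w, φ (z - w) * (u w : ℂ)

/-- The truncated Lizorkin–Triebel norm `‖u‖_{F̃⁰_{∞,1}} = ‖Σ_{j≥1} |φ_j * u|‖_∞`. -/
def F01norm {n : ℕ} (ψ₀ : PSpace n → ℝ) (u : PSpace n → ℝ) : ℝ :=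
  ⨆ z, ∑' j : ℕ, ‖pconv (phiJ ψ₀ (j + 1)) u z‖

/-- The truncated Lizorkin–Triebel norm `‖u‖_{F̃⁰_{∞,2}} = ‖(Σ_{j≥1} |φ_j * u|²)^{1/2}‖_∞`. -/
def F02norm {n : ℕ} (ψ₀ : PSpace n → ℝ) (u : PSpace n → ℝ) : ℝ :=
  ⨆ z, Real.sqrt (∑' j : ℕ, ‖pconv (phiJ ψ₀ (j + 1)) u z‖ ^ 2)

/-- The Lizorkin–Triebel norm `‖u‖_{F^γ_{∞,2}} = ‖(Σ_{j≥0} 2^{2γj} |φ_j * u|²)^{1/2}‖_∞`. -/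
def Fg2norm {n : ℕ} (ψ₀ : PSpace n → ℝ) (γ : ℝ) (u : PSpace n → ℝ) : ℝ :=
  ⨆ z, Real.sqrt (∑' j : ℕ, (2 : ℝ) ^ (2 * γ * j) * ‖pconv (phiJ ψ₀ j) u z‖ ^ 2)

/-- The anisotropic Besov quasi-norm `‖u‖_{B^s_{p,q}}`. -/
def besovNorm {n : ℕ} (ψ₀ : PSpace n → ℝ) (s : ℝ) (p q : ℝ≥0∞) (u : PSpace n → ℝ) : ℝ :=
  if q = ∞ then ⨆ j : ℕ, (2 : ℝ) ^ (s * j) * (eLpNorm (pconv (phiJ ψ₀ j) u) p volume).toReal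
  else (∑' j : ℕ, ((2 : ℝ) ^ (s * j) *
    (eLpNorm (pconv (phiJ ψ₀ j) u) p volume).toReal) ^ q.toReal) ^ (1 / q.toReal)

/-- The standing hypotheses on the cut-off function `ψ₀`: smooth, compactly supported,
equal to `1` on `{‖z‖ₚ ≤ 1}` and to `0` on `{‖z‖ₚ ≥ 2}`. -/
structure IsCutoff {n : ℕ} (ψ₀ : PSpace n → ℝ) : Prop where
  smooth : ContDiff ℝ (⊤ : ℕ∞) ψ₀
  compact_support : HasCompactSupport ψ₀
  eq_one : ∀ z, pnorm z ≤ 1 → ψ₀ z = 1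
  eq_zero : ∀ z, 2 ≤ pnorm z → ψ₀ z = 0

lemma final_abstract {Z : Type*} [Nonempty Z] (C0 q : ℝ) (hC0 : 0 < C0) (hq0 : 0 < q) (hq1 : q < 1) :
    ∃ C : ℝ, 0 < C ∧ ∀ (W : ℝ) (_ : 0 ≤ W) (a : Z → ℕ → ℝ) (_ : ∀ z j, 0 ≤ a z j)
      (_ : ∀ z j, a z j ≤ C0 * q ^ j * W),
      (⨆ z, ∑' j, a z j) ≤ C * (1 + (⨆ z, Real.sqrt (∑' j, a z j ^ 2)) *
        (1 + Real.sqrt (logPlus W))) := by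
  set l := Real.log q⁻¹ with hl
  have hlpos : 0 < l := Real.log_pos ((one_lt_inv₀ hq0).2 hq1)
  have h1q : 0 < 1 - q := by linarith
  refine ⟨1 + Real.sqrt (1 / l) + C0 / (1 - q), by positivity, ?_⟩
  intro W hW a ha hab
  have hgeo : Summable (fun j : ℕ => C0 * q ^ j * W) :=
    ((summable_geometric_of_lt_one hq0.le hq1).mul_left C0).mul_right W
  have hsum : ∀ z, Summable (a z) := fun z => Summable.of_nonneg_of_le (ha z) (hab z) hgeo
  have hgeo2 : Summable (fun j : ℕ => (C0 * q ^ j * W) ^ 2) := by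
    have : (fun j : ℕ => (C0 * q ^ j * W) ^ 2) = fun j : ℕ => (C0 * W) ^ 2 * (q ^ 2) ^ j := by
      funext j; ring
    rw [this]
    exact (summable_geometric_of_lt_one (by positivity) (by nlinarith)).mul_left _
  have hle2 : ∀ z j, a z j ^ 2 ≤ (C0 * q ^ j * W) ^ 2 := fun z j =>
    pow_le_pow_left₀ (ha z j) (hab z j) 2
  have hsum2 : ∀ z, Summable (fun j => a z j ^ 2) := fun z =>
    Summable.of_nonneg_of_le (fun j => sq_nonneg _) (hle2 z) hgeo2
  have hbdd : BddAbove (Set.range fun z => Real.sqrt (∑' j, a z j ^ 2)) := by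
    refine ⟨Real.sqrt (∑' j : ℕ, (C0 * q ^ j * W) ^ 2), ?_⟩
    rintro _ ⟨z, rfl⟩
    exact Real.sqrt_le_sqrt ((hsum2 z).tsum_le_tsum (hle2 z) hgeo2)
  set S := ⨆ z, Real.sqrt (∑' j, a z j ^ 2) with hS
  have hS0 : 0 ≤ S := Real.iSup_nonneg fun z => Real.sqrt_nonneg _
  set L := logPlus W with hL
  have hL0 : 0 ≤ L := le_max_right _ _
  set N := ⌈L / l⌉₊ with hN
  have hNle : (N : ℝ) ≤ L / l + 1 := (Nat.ceil_lt_add_one (by positivity)).le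
  have hNge : L / l ≤ N := Nat.le_ceil _
  have hqN : q ^ N * W ≤ 1 := by
    rcases le_or_gt W 1 with h | h
    · exact mul_le_one₀ (pow_le_one₀ hq0.le hq1.le) hW h
    · have hWpos : 0 < W := by linarith
      have : Real.log (q ^ N * W) ≤ 0 := by
        rw [Real.log_mul (by positivity) (by positivity), Real.log_pow]
        have h1 : Real.log W ≤ L := le_max_left _ _
        have h2 : L ≤ N * l := by rwa [div_le_iff₀ hlpos] at hNge
        rw [hl, Real.log_inv] at h2
        linarith
      by_contra hc
      push Not at hc
      linarith [Real.log_pos hc]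
  have hsqN : Real.sqrt N ≤ Real.sqrt (1 / l) * Real.sqrt L + 1 := by
    calc Real.sqrt N ≤ Real.sqrt (1 / l * L + 1) := Real.sqrt_le_sqrt (by
            calc (N : ℝ) ≤ L / l + 1 := hNle
              _ = _ := by ring)
      _ ≤ Real.sqrt (1 / l * L) + Real.sqrt 1 := by
            apply Real.sqrt_le_iff.2 ⟨by positivity, ?_⟩
            rw [add_sq, Real.sq_sqrt (by positivity), Real.sq_sqrt (by positivity)]
            have := mul_nonneg (Real.sqrt_nonneg (1 / l * L)) (Real.sqrt_nonneg 1)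
            linarith
      _ = _ := by rw [Real.sqrt_mul (by positivity), Real.sqrt_one]
  apply ciSup_le
  intro z
  rw [← (hsum z).sum_add_tsum_nat_add N]
  have hhead : ∑ j ∈ Finset.range N, a z j ≤ Real.sqrt N * S := by
    have h1 : (∑ j ∈ Finset.range N, a z j) ^ 2 ≤ N * ∑ j ∈ Finset.range N, a z j ^ 2 := by
      simpa using sq_sum_le_card_mul_sum_sq (s := Finset.range N) (f := a z)
    have h2 : ∑ j ∈ Finset.range N, a z j ^ 2 ≤ ∑' j, a z j ^ 2 :=
      (hsum2 z).sum_le_tsum _ (fun j _ => sq_nonneg _)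
    calc ∑ j ∈ Finset.range N, a z j ≤ Real.sqrt (N * ∑' j, a z j ^ 2) := by
          apply Real.le_sqrt_of_sq_le
          exact h1.trans (by gcongr)
      _ = Real.sqrt N * Real.sqrt (∑' j, a z j ^ 2) := Real.sqrt_mul (by positivity) _
      _ ≤ _ := by
          gcongr
          exact le_ciSup hbdd z
  have htail : ∑' j, a z (j + N) ≤ C0 / (1 - q) := by
    have h1 : ∑' j, a z (j + N) ≤ ∑' j : ℕ, C0 * q ^ (j + N) * W :=
      ((summable_nat_add_iff N).2 (hsum z)).tsum_le_tsum (fun j => hab z _)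
        ((summable_nat_add_iff N).2 hgeo)
    have h2 : ∑' j : ℕ, C0 * q ^ (j + N) * W = C0 * (q ^ N * W) * (1 - q)⁻¹ := by
      rw [← tsum_geometric_of_lt_one hq0.le hq1, ← tsum_mul_left]
      congr 1; funext j; ring
    rw [h2] at h1
    refine h1.trans ?_
    rw [div_eq_mul_inv]
    gcongr
    nlinarith
  have e1 : Real.sqrt N * S ≤ (Real.sqrt (1 / l) * Real.sqrt L + 1) * S := by gcongr
  have p1 := Real.sqrt_nonneg (1 / l)
  have p2 := Real.sqrt_nonneg L
  have p3 : 0 ≤ C0 / (1 - q) := by positivity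
  generalize Real.sqrt (1 / l) = A at *
  generalize Real.sqrt L = B at *
  generalize C0 / (1 - q) = D at *
  have t1 : 0 ≤ A * S := by positivity
  have t2 : 0 ≤ D * S := by positivity
  have t3 : 0 ≤ D * (S * B) := by positivity
  have t4 : 0 ≤ S * B := by positivity
  nlinarith

lemma pnorm_pdil {n : ℕ} (η : ℝ) (hη : 0 ≤ η) (z : PSpace n) : pnorm (pdil η z) = η * pnorm z := by
  unfold pnorm pdil
  rw [mul_max_of_nonneg _ _ hη, Real.mul_iSup_of_nonneg hη]
  congr 1
  · congr 1; funext i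
    simp [Fin.castSucc_ne_last, abs_mul, abs_of_nonneg hη]
  · simp [abs_mul, Real.sqrt_sq hη]

lemma psiJ_zero_small {n : ℕ} {ψ₀ : PSpace n → ℝ} (hψ : IsCutoff ψ₀) (j : ℕ) (z : PSpace n)
    (h : pnorm z ≤ 2 ^ j) : psiJ ψ₀ (j + 1) z = 0 := by
  simp only [psiJ]
  rw [hψ.eq_one, hψ.eq_one, sub_self]
  · rw [pnorm_pdil _ (by positivity), Real.rpow_neg (by norm_num), Real.rpow_natCast,
      inv_mul_le_iff₀ (by positivity)]
    simpa using h
  · rw [pnorm_pdil _ (by positivity), Real.rpow_neg (by norm_num), inv_mul_le_iff₀ (by positivity)]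
    rw [Real.rpow_add (by norm_num), Real.rpow_natCast, Real.rpow_one]
    have : (0 : ℝ) < 2 ^ j := by positivity
    linarith

lemma psiJ_zero_large {n : ℕ} {ψ₀ : PSpace n → ℝ} (hψ : IsCutoff ψ₀) (j : ℕ) (z : PSpace n)
    (h : 2 ^ (j + 2) ≤ pnorm z) : psiJ ψ₀ (j + 1) z = 0 := by
  have : (0 : ℝ) < 2 ^ j := by positivity
  have h' : 2 ^ j * 4 ≤ pnorm z := by rw [pow_add] at h; norm_num at h; exact h
  simp only [psiJ]
  rw [hψ.eq_zero, hψ.eq_zero, sub_self]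
  · rw [pnorm_pdil _ (by positivity), Real.rpow_neg (by norm_num), Real.rpow_natCast,
      le_inv_mul_iff₀ (by positivity)]
    linarith
  · rw [pnorm_pdil _ (by positivity), Real.rpow_neg (by norm_num), le_inv_mul_iff₀ (by positivity)]
    rw [Real.rpow_add (by norm_num), Real.rpow_natCast, Real.rpow_one]
    linarith

lemma psi0_bdd {n : ℕ} {ψ₀ : PSpace n → ℝ} (hψ : IsCutoff ψ₀) :
    ∃ M : ℝ, 0 < M ∧ ∀ j z, |psiJ ψ₀ (j + 1) z| ≤ M := by
  obtain ⟨M, hM⟩ := hψ.compact_support.exists_bound_of_continuous hψ.smooth.continuous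
  refine ⟨2 * |M| + 1, by positivity, fun j z => ?_⟩
  simp only [psiJ]
  have h1 := hM (pdil ((2 : ℝ) ^ (-((j : ℝ) + 1))) z)
  have h2 := hM (pdil ((2 : ℝ) ^ (-(j : ℝ))) z)
  rw [Real.norm_eq_abs] at h1 h2
  have := abs_sub (ψ₀ (pdil ((2 : ℝ) ^ (-((j : ℝ) + 1))) z)) (ψ₀ (pdil ((2 : ℝ) ^ (-(j : ℝ))) z))
  have := le_abs_self M
  linarith

lemma continuous_pdil {n : ℕ} (η : ℝ) : Continuous (pdil η : PSpace n → PSpace n) := by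
  unfold pdil
  apply (ContinuousLinearEquiv.continuous _).comp
  apply continuous_pi
  intro i
  split_ifs <;> fun_prop

lemma continuous_psiJ {n : ℕ} {ψ₀ : PSpace n → ℝ} (hψ : IsCutoff ψ₀) (j : ℕ) :
    Continuous (psiJ ψ₀ (j + 1)) := by
  have := hψ.smooth.continuous
  simp only [psiJ]
  exact (this.comp (continuous_pdil _)).sub (this.comp (continuous_pdil _))

/-- Parabolic box. -/
def pBox (n : ℕ) (R : ℝ) : Set (PSpace n) :=
  (WithLp.ofLp : PSpace n → _) ⁻¹' (Set.univ.pi fun k : Fin (n + 1) =>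
    Set.Icc (-(if k = Fin.last n then R ^ 2 else R)) (if k = Fin.last n then R ^ 2 else R))

lemma pBox_meas (n : ℕ) (R : ℝ) : MeasurableSet (pBox n R) :=
  (PiLp.volume_preserving_ofLp (Fin (n+1))).measurable
    (MeasurableSet.univ_pi fun _ => measurableSet_Icc)

lemma pBox_vol (n : ℕ) (R : ℝ) (hR : 0 ≤ R) :
    volume (pBox n R) = ENNReal.ofReal (2 ^ (n + 1) * R ^ (n + 2)) := by
  unfold pBox
  rw [(PiLp.volume_preserving_ofLp (Fin (n+1))).measure_preimage
    (MeasurableSet.univ_pi fun _ => measurableSet_Icc).nullMeasurableSet, volume_pi_pi]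
  simp only [Real.volume_Icc]
  rw [← ENNReal.ofReal_prod_of_nonneg, Fin.prod_univ_castSucc]
  · congr 1
    simp only [Fin.castSucc_ne_last, if_false, if_true, Finset.prod_const, Finset.card_univ,
      Fintype.card_fin]
    ring
  · intro i _
    split_ifs <;> nlinarith [sq_nonneg R]

lemma mem_pBox {n : ℕ} (R : ℝ) (z : PSpace n) (hR : 0 ≤ R) (h : pnorm z ≤ R) : z ∈ pBox n R := by
  unfold pBox
  simp only [Set.mem_preimage, Set.mem_univ_pi]
  intro k
  rw [Set.mem_Icc, ← abs_le]
  unfold pnorm at h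
  obtain ⟨h1, h2⟩ := max_le_iff.1 h
  refine Fin.lastCases ?_ (fun i => ?_) k
  · simp only [if_true]
    rwa [Real.sqrt_le_left hR] at h2
  · rw [if_neg (Fin.castSucc_ne_last i)]
    exact (le_ciSup (f := fun i : Fin n => |z i.castSucc|) (Set.finite_range _).bddAbove i).trans h1

/-- exponents -/
def pExp (n m : ℕ) (k : Fin (n + 1)) : ℕ := if k = Fin.last n then m else 2 * m

lemma pnorm_pow_le {n : ℕ} (hn : 1 ≤ n) (m : ℕ) (z : PSpace n) (R : ℝ) (hR : 0 ≤ R) (h : R ≤ pnorm z) :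
    R ^ (2 * m) ≤ ∑ k : Fin (n + 1), |z k| ^ pExp n m k := by
  have key : ∀ k, R ^ (2 * m) ≤ |z k| ^ pExp n m k → 
      R ^ (2 * m) ≤ ∑ k : Fin (n + 1), |z k| ^ pExp n m k := fun k hk =>
    hk.trans (Finset.single_le_sum (f := fun k => |z k| ^ pExp n m k)
      (fun i _ => by positivity) (Finset.mem_univ k))
  unfold pnorm at h
  rcases le_max_iff.1 h with h | h
  · have : Nonempty (Fin n) := ⟨⟨0, hn⟩⟩
    obtain ⟨i, hi⟩ := exists_eq_ciSup_of_finite (f := fun i : Fin n => |z i.castSucc|)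
    rw [← hi] at h
    apply key i.castSucc
    rw [pExp, if_neg (Fin.castSucc_ne_last i)]
    gcongr
  · apply key (Fin.last n)
    rw [pExp, if_pos rfl, pow_mul]
    rw [Real.le_sqrt hR (abs_nonneg _)] at h
    gcongr
open SchwartzMap in
/-- complexification -/
def cplx {n : ℕ} (u : SchwartzMap (PSpace n) ℝ) : SchwartzMap (PSpace n) ℂ :=
  SchwartzMap.postcompCLM (𝕜 := ℝ) Complex.ofRealCLM u

lemma cplx_apply {n : ℕ} (u : SchwartzMap (PSpace n) ℝ) (z : PSpace n) : cplx u z = (u z : ℂ) := rfl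

open LineDeriv in
lemma cplx_lineDeriv {n : ℕ} (v : PSpace n) (u : SchwartzMap (PSpace n) ℝ) :
    cplx (lineDerivOp v u) = (lineDerivOp v (cplx u)) := by
  ext z
  rw [cplx_apply, SchwartzMap.lineDerivOp_apply_eq_fderiv, SchwartzMap.lineDerivOp_apply_eq_fderiv]
  have h : HasFDerivAt (fun z => Complex.ofRealCLM (u z)) (Complex.ofRealCLM.comp (fderiv ℝ u z)) z :=
    Complex.ofRealCLM.hasFDerivAt.comp z (u.hasFDerivAt z)
  have h2 : (⇑(cplx u)) = fun z => Complex.ofRealCLM (u z) := rfl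
  rw [h2, h.fderiv]
  rfl

/-- partial derivative -/
def pD {n : ℕ} (k : Fin (n + 1)) (u : PSpace n → ℝ) : PSpace n → ℝ :=
  fun z => fderiv ℝ u z (EuclideanSpace.single k 1)

open LineDeriv in
lemma pD_iter {n : ℕ} (k : Fin (n + 1)) (N : ℕ) (u : SchwartzMap (PSpace n) ℝ) :
    ((pD k)^[N] ⇑u) = ⇑((fun f : SchwartzMap (PSpace n) ℝ => lineDerivOp (EuclideanSpace.single k (1:ℝ) : PSpace n) f)^[N] u) := by
  induction N with
  | zero => rfl
  | succ N ih =>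
    rw [Function.iterate_succ_apply', Function.iterate_succ_apply', ih]
    funext z
    rw [SchwartzMap.lineDerivOp_apply_eq_fderiv]
    rfl

open LineDeriv in
lemma fourier_iter {n : ℕ} (k : Fin (n + 1)) (N : ℕ) (u : SchwartzMap (PSpace n) ℝ) (ξ : PSpace n) :
    𝓕 (cplx ((fun f : SchwartzMap (PSpace n) ℝ => lineDerivOp (EuclideanSpace.single k (1:ℝ) : PSpace n) f)^[N] u)) ξ
      = (2 * π * Complex.I * ξ k) ^ N * 𝓕 (cplx u) ξ := by
  induction N with
  | zero => simp
  | succ N ih =>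
    rw [Function.iterate_succ_apply', cplx_lineDeriv, SchwartzMap.fourier_lineDerivOp_eq]
    rw [smul_apply, SchwartzMap.smulLeftCLM_apply_apply (by fun_prop), ih]
    simp [PiLp.inner_apply]
    ring

lemma eLpNorm_fourier {n : ℕ} (u : SchwartzMap (PSpace n) ℝ) :
    eLpNorm (⇑(𝓕 (cplx u) : SchwartzMap (PSpace n) ℂ)) 2 volume = eLpNorm (⇑u) 2 volume := by
  have h := SchwartzMap.norm_fourier_toL2_eq (cplx u)
  rw [SchwartzMap.norm_toLp, SchwartzMap.norm_toLp] at h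
  rw [ENNReal.toReal_eq_toReal_iff' (SchwartzMap.memLp _ _ _).eLpNorm_ne_top (SchwartzMap.memLp _ _ _).eLpNorm_ne_top] at h
  rw [h]
  apply eLpNorm_congr_norm_ae
  filter_upwards with z
  simp [cplx_apply]

lemma weighted_bound {n : ℕ} (k : Fin (n + 1)) (N : ℕ) (u : SchwartzMap (PSpace n) ℝ) (R : ℝ) (hR : 0 ≤ R) :
    IntegrableOn (fun ξ => |ξ k| ^ N * ‖𝓕 (cplx u) ξ‖) (pBox n R) ∧
    ∫ ξ in pBox n R, |ξ k| ^ N * ‖𝓕 (cplx u) ξ‖ ≤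
      Real.sqrt (2 ^ (n + 1) * R ^ (n + 2)) * L2norm Set.univ ((pD k)^[N] ⇑u) := by
  rw [pD_iter]
  have hf := fourier_iter k N u
  generalize ((fun f : SchwartzMap (PSpace n) ℝ => LineDeriv.lineDerivOp (EuclideanSpace.single k (1:ℝ) : PSpace n) f)^[N] u) = V at hf ⊢
  have hpt : ∀ ξ : PSpace n, |ξ k| ^ N * ‖𝓕 (cplx u) ξ‖ ≤ ‖𝓕 (cplx V) ξ‖ := by
    intro ξ
    rw [hf]
    simp only [norm_mul, norm_pow, Complex.norm_I, Complex.norm_real, Real.norm_eq_abs, mul_one,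
      Complex.norm_ofNat, abs_of_pos Real.pi_pos]
    gcongr
    have := Real.pi_gt_three
    nlinarith [abs_nonneg (ξ k)]
  have hVint : Integrable (fun ξ => ‖𝓕 (cplx V) ξ‖) volume := (𝓕 (cplx V) : SchwartzMap (PSpace n) ℂ).integrable.norm
  have hcont : Continuous (fun ξ : PSpace n => |ξ k| ^ N * ‖𝓕 (cplx u) ξ‖) := by
    have := (𝓕 (cplx u) : SchwartzMap (PSpace n) ℂ).continuous
    fun_prop
  have hint : Integrable (fun ξ : PSpace n => |ξ k| ^ N * ‖𝓕 (cplx u) ξ‖) volume := by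
    refine hVint.mono' hcont.aestronglyMeasurable (Filter.Eventually.of_forall fun ξ => ?_)
    rw [Real.norm_of_nonneg (by positivity)]
    exact hpt ξ
  refine ⟨hint.integrableOn, ?_⟩
  calc _ ≤ ∫ ξ in pBox n R, ‖𝓕 (cplx V) ξ‖ :=
        setIntegral_mono hint.integrableOn hVint.integrableOn hpt
    _ = (eLpNorm (⇑(𝓕 (cplx V) : SchwartzMap (PSpace n) ℂ)) 1 (volume.restrict (pBox n R))).toReal := by
        rw [eLpNorm_one_eq_lintegral_enorm, integral_norm_eq_lintegral_enorm]
        exact (𝓕 (cplx V) : SchwartzMap (PSpace n) ℂ).continuous.aestronglyMeasurable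
    _ ≤ (eLpNorm (⇑V) 2 volume * ENNReal.ofReal (2 ^ (n + 1) * R ^ (n + 2)) ^ (1/2 : ℝ)).toReal := by
        apply ENNReal.toReal_mono
        · apply ENNReal.mul_ne_top (SchwartzMap.memLp _ _ _).eLpNorm_ne_top
          exact ENNReal.rpow_ne_top_of_nonneg (by norm_num) ENNReal.ofReal_ne_top
        · have h1 := eLpNorm_le_eLpNorm_mul_rpow_measure_univ (p := 1) (q := 2)
            (μ := volume.restrict (pBox n R)) (f := ⇑(𝓕 (cplx V) : SchwartzMap (PSpace n) ℂ)) (by norm_num)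
            (𝓕 (cplx V) : SchwartzMap (PSpace n) ℂ).continuous.aestronglyMeasurable
          rw [Measure.restrict_apply_univ, pBox_vol n R hR] at h1
          have he : (1 / ENNReal.toReal 1 - 1 / ENNReal.toReal 2 : ℝ) = 1 / 2 := by norm_num
          rw [he] at h1
          refine h1.trans (mul_le_mul_left ?_ _)
          rw [← eLpNorm_fourier]
          exact eLpNorm_mono_measure _ Measure.restrict_le_self
    _ = _ := by
        rw [ENNReal.toReal_mul, ENNReal.ofReal_rpow_of_nonneg (by positivity) (by norm_num),
          ENNReal.toReal_ofReal (by positivity), ← Real.sqrt_eq_rpow, mul_comm, L2norm,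
          Measure.restrict_univ]

lemma L2norm_nonneg {n : ℕ} (O : Set (PSpace n)) (v) : 0 ≤ L2norm O v := ENNReal.toReal_nonneg

lemma term_le_sob {n : ℕ} (m : ℕ) (u : PSpace n → ℝ) (r s : ℕ) (α : Fin n → ℕ) (h : 2 * r + s ≤ 2 * m)
    (hα : ∑ i, α i = s) : L2norm Set.univ (mixDeriv r α u) ≤ sobNorm m Set.univ u := by
  unfold sobNorm
  have h1 : L2norm Set.univ (mixDeriv r α u) ≤
      ∑ α ∈ Finset.Nat.antidiagonalTuple n s, L2norm Set.univ (mixDeriv r α u) :=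
    Finset.single_le_sum (f := fun α => L2norm Set.univ (mixDeriv r α u))
      (fun _ _ => L2norm_nonneg _ _) (Finset.Nat.mem_antidiagonalTuple.2 hα)
  refine h1.trans ?_
  refine Finset.single_le_sum (f := fun p : ℕ × ℕ => ∑ α ∈ Finset.Nat.antidiagonalTuple n p.2,
    L2norm Set.univ (mixDeriv p.1 α u)) (fun _ _ => Finset.sum_nonneg fun _ _ => L2norm_nonneg _ _)
    (a := (r, s)) ?_
  simp
  omega

lemma foldr_zero {n : ℕ} (α : Fin n → ℕ) (u : PSpace n → ℝ) (l : List (Fin n)) (h : ∀ i ∈ l, α i = 0) :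
    l.foldr (fun i v => (Dx i)^[α i] v) u = u := by
  induction l with
  | nil => rfl
  | cons a l ih =>
    rw [List.foldr_cons, ih fun i hi => h i (List.mem_cons_of_mem _ hi), h a List.mem_cons_self]
    rfl

lemma foldr_single {n : ℕ} (i : Fin n) (N : ℕ) (u : PSpace n → ℝ) (l : List (Fin n)) (hl : l.Nodup)
    (hi : i ∈ l) :
    l.foldr (fun j v => (Dx j)^[(Pi.single i N : Fin n → ℕ) j] v) u = (Dx i)^[N] u := by
  induction l with
  | nil => simp at hi
  | cons a l ih =>
    rw [List.foldr_cons]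
    rw [List.nodup_cons] at hl
    by_cases hai : a = i
    · subst hai
      rw [foldr_zero, Pi.single_eq_same]
      intro j hj
      exact Pi.single_eq_of_ne (fun e : j = a => hl.1 (e ▸ hj)) _
    · rw [ih hl.2 (by simpa [Ne.symm hai] using hi), Pi.single_eq_of_ne hai]
      rfl

lemma pD_le_sob {n : ℕ} (m : ℕ) (u : PSpace n → ℝ) (k : Fin (n + 1)) :
    L2norm Set.univ ((pD k)^[pExp n m k] u) ≤ sobNorm m Set.univ u := by
  refine Fin.lastCases ?_ (fun i => ?_) k
  · have := term_le_sob m u m 0 (fun _ => 0) (by omega) (by simp)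
    rw [mixDeriv, DxPow, foldr_zero _ _ _ (fun _ _ => rfl)] at this
    rw [pExp, if_pos rfl]
    exact this
  · have := term_le_sob m u 0 (2 * m) (Pi.single i (2 * m)) (by omega) (by simp)
    rw [mixDeriv, DxPow, foldr_single _ _ _ _ (List.nodup_finRange n) (List.mem_finRange i)] at this
    rw [pExp, if_neg (Fin.castSucc_ne_last i)]
    exact this

lemma pconv_bound {n : ℕ} (ψ : PSpace n → ℝ) (hψ : Integrable ψ) (u : SchwartzMap (PSpace n) ℝ)
    (z : PSpace n) :
    ‖pconv (𝓕⁻ (fun z => ((ψ z : ℝ) : ℂ))) u z‖ ≤ ∫ ξ, |ψ ξ| * ‖𝓕 (cplx u) ξ‖ := by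
  set h : PSpace n → ℂ := fun ξ => (Real.fourierChar (inner ℝ ξ z) : ℂ) * (ψ ξ : ℂ) with hh
  have hint : Integrable h := by
    refine Integrable.bdd_mul (c := 1) hψ.ofReal ?_ ?_
    · apply Continuous.aestronglyMeasurable
      exact continuous_subtype_val.comp (Real.continuous_fourierChar.comp (by fun_prop))
    · filter_upwards with ξ using (Circle.norm_coe _).le
  have h1 : ∀ w, (𝓕⁻ (fun z => ((ψ z : ℝ) : ℂ))) (z - w) = 𝓕 h w := by
    intro w
    rw [Real.fourierInv_eq, Real.fourier_eq]
    congr 1; funext ξ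
    rw [hh]
    simp only [Circle.smul_def, smul_eq_mul]
    rw [← mul_assoc, ← Circle.coe_mul, ← AddChar.map_add_eq_mul, inner_sub_right]
    congr 4; ring
  have h2 : pconv (𝓕⁻ (fun z => ((ψ z : ℝ) : ℂ))) u z = ∫ ξ, h ξ * 𝓕 (cplx u) ξ := by
    unfold pconv
    simp_rw [h1]
    have := VectorFourier.integral_fourierIntegral_smul_eq_flip (μ := (volume : Measure (PSpace n)))
      (ν := (volume : Measure (PSpace n))) (L := innerₗ (PSpace n)) (f := h) (g := ⇑(cplx u))
      Real.continuous_fourierChar (by exact continuous_inner) hint (cplx u).integrable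
    rw [flip_innerₗ] at this
    exact this
  rw [h2]
  refine (norm_integral_le_integral_norm _).trans (le_of_eq ?_)
  congr 1; funext ξ
  simp only [hh, norm_mul, Circle.norm_coe, one_mul, Complex.norm_real, Real.norm_eq_abs]

lemma conv_bound {n m : ℕ} (hn : 1 ≤ n) {ψ₀ : PSpace n → ℝ} (hψ : IsCutoff ψ₀) :
    ∃ C : ℝ, 0 < C ∧ ∀ (u : SchwartzMap (PSpace n) ℝ) (z : PSpace n) (j : ℕ),
      ‖pconv (phiJ ψ₀ (j + 1)) u z‖ ≤ C * (Real.sqrt (2 ^ (n + 2)) / 2 ^ (2 * m)) ^ j *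
        sobNorm m Set.univ ⇑u := by
  obtain ⟨M, hM, hMb⟩ := psi0_bdd hψ
  refine ⟨M * (n + 1) * Real.sqrt (2 ^ (n + 1) * 4 ^ (n + 2)), by positivity, fun u z j => ?_⟩
  set R : ℝ := 2 ^ (j + 2) with hR
  have hR0 : 0 ≤ R := by positivity
  have hsupp : ∀ ξ, ξ ∉ pBox n R → psiJ ψ₀ (j + 1) ξ = 0 := by
    intro ξ hξ
    apply psiJ_zero_large hψ
    by_contra hc
    exact hξ (mem_pBox R ξ hR0 (not_le.1 hc).le)
  have hvol : volume (pBox n R) ≠ ⊤ := by rw [pBox_vol n R hR0]; exact ENNReal.ofReal_ne_top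
  have hint : Integrable (psiJ ψ₀ (j + 1)) := by
    rw [← integrableOn_iff_integrable_of_support_subset (s := pBox n R)]
    · exact Measure.integrableOn_of_bounded hvol (continuous_psiJ hψ j).aestronglyMeasurable
        (Filter.Eventually.of_forall (hMb j))
    · intro ξ hξ
      by_contra hc
      exact hξ (hsupp ξ hc)
  have h1 := pconv_bound _ hint u z
  refine h1.trans ?_
  rw [← setIntegral_eq_integral_of_forall_compl_eq_zero (s := pBox n R)
    (by intro ξ hξ; simp [hsupp ξ hξ])]
  have hw := fun k => weighted_bound k (pExp n m k) u R hR0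
  have hpt : ∀ ξ : PSpace n, |psiJ ψ₀ (j + 1) ξ| * ‖𝓕 (cplx u) ξ‖ ≤
      M * ((2 ^ j) ^ (2 * m))⁻¹ * ∑ k : Fin (n + 1), |ξ k| ^ pExp n m k * ‖𝓕 (cplx u) ξ‖ := by
    intro ξ
    by_cases hξ : pnorm ξ ≤ 2 ^ j
    · rw [psiJ_zero_small hψ j ξ hξ, abs_zero, zero_mul]
      positivity
    · have h2 := pnorm_pow_le hn m ξ (2 ^ j) (by positivity) (not_le.1 hξ).le
      rw [← Finset.sum_mul, mul_assoc, ← mul_assoc _ _ ‖_‖]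
      rw [← mul_assoc]
      have h3 : 1 ≤ ((2 ^ j : ℝ) ^ (2 * m))⁻¹ * ∑ k : Fin (n + 1), |ξ k| ^ pExp n m k := by
        rw [le_inv_mul_iff₀ (by positivity), mul_one]; exact h2
      gcongr
      exact (hMb j ξ).trans (le_mul_of_one_le_right hM.le h3)
  calc _ ≤ ∫ ξ in pBox n R, M * ((2 ^ j) ^ (2 * m))⁻¹ *
          ∑ k : Fin (n + 1), |ξ k| ^ pExp n m k * ‖𝓕 (cplx u) ξ‖ := by
        apply integral_mono_of_nonneg
        · filter_upwards with ξ; positivity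
        · exact (integrable_finsetSum _ fun k _ => (hw k).1).const_mul _
        · filter_upwards with ξ using hpt ξ
    _ = M * ((2 ^ j) ^ (2 * m))⁻¹ *
          ∑ k : Fin (n + 1), ∫ ξ in pBox n R, |ξ k| ^ pExp n m k * ‖𝓕 (cplx u) ξ‖ := by
        rw [integral_const_mul, integral_finsetSum _ fun k _ => (hw k).1]
    _ ≤ M * ((2 ^ j) ^ (2 * m))⁻¹ *
          ∑ k : Fin (n + 1), Real.sqrt (2 ^ (n + 1) * R ^ (n + 2)) * sobNorm m Set.univ ⇑u := by
        gcongr with k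
        exact (hw k).2.trans (by gcongr; exact pD_le_sob m u k)
    _ = _ := by
        have : (2 ^ (n + 1) * R ^ (n + 2) : ℝ) = 2 ^ (n + 1) * 4 ^ (n + 2) * (2 ^ (n + 2)) ^ j := by
          have h4 : R = 4 * 2 ^ j := by rw [hR]; ring
          rw [h4, mul_pow, ← pow_mul, ← pow_mul, mul_comm j]; ring
        rw [this, Real.sqrt_mul (by positivity) ((2 ^ (n + 2)) ^ j), Finset.sum_const,
          Finset.card_univ, Fintype.card_fin, nsmul_eq_mul, div_pow]
        have h5 : Real.sqrt ((2 ^ (n + 2)) ^ j) = Real.sqrt (2 ^ (n + 2)) ^ j := by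
          rw [Real.sqrt_eq_iff_mul_self_eq (by positivity) (by positivity), ← mul_pow,
            Real.mul_self_sqrt (by positivity)]
        rw [h5, ← pow_mul (2 : ℝ) j, ← pow_mul (2:ℝ) (2 * m), mul_comm j]
        push_cast
        field_simp
theorem basic_log_sobolev_inequality (n m : ℕ) (hn : 1 ≤ n) (hm : 0 < m)
    (hmn : ((n : ℝ) + 2) / 4 < m) (ψ₀ : PSpace n → ℝ) (hψ : IsCutoff ψ₀) :
    ∃ C : ℝ, 0 < C ∧ ∀ u : SchwartzMap (PSpace n) ℝ,
      F01norm ψ₀ ⇑u ≤ C * (1 + F02norm ψ₀ ⇑u *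
        (1 + Real.sqrt (logPlus (sobNorm m Set.univ ⇑u)))) := by
  obtain ⟨C0, hC0, hb⟩ := conv_bound (m := m) hn hψ
  have hq1 : Real.sqrt (2 ^ (n + 2)) / 2 ^ (2 * m) < 1 := by
    rw [div_lt_one (by positivity), Real.sqrt_lt' (by positivity), ← pow_mul]
    apply pow_lt_pow_right₀ (by norm_num)
    have : ((n + 2 : ℕ) : ℝ) < ((2 * m * 2 : ℕ) : ℝ) := by push_cast; linarith
    exact_mod_cast this
  obtain ⟨C, hC, h⟩ := final_abstract (Z := PSpace n) C0 _ hC0 (by positivity) hq1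
  refine ⟨C, hC, fun u => ?_⟩
  exact h (sobNorm m Set.univ ⇑u)
    (Finset.sum_nonneg fun _ _ => Finset.sum_nonneg fun _ _ => L2norm_nonneg _ _)
    (fun z j => ‖pconv (phiJ ψ₀ (j + 1)) u z‖) (fun _ _ => norm_nonneg _) (fun z j => hb u z j)

end
end

section
/- Let n ≥ 1 and let m be a positive integer with m > (n+2)/4. Then there exists a constant C = C(m,n) > 0 such that for every Schwartz function u on ℝ^{n+1}, ‖φ₀ * u‖_{L^∞(ℝ^{n+1})} ≤ C (1 + ‖u‖_{BMOₚ(ℝ^{n+1})} (1 + log⁺ ‖u‖_{W₂^{2m,m}(ℝ^{n+1})})), where φ₀ = 𝓕^{−1} ψ₀. -/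
open MeasureTheory Real
open scoped FourierTransform ENNReal

noncomputable section

lemma pnorm_lt_iff {n : ℕ} (w : PSpace n) {r : ℝ} (hr : 0 < r) :
    pnorm w < r ↔ (∀ i : Fin n, |w i.castSucc| < r) ∧ |w (Fin.last n)| < r ^ 2 := by
  unfold pnorm
  rw [max_lt_iff, Real.sqrt_lt' hr]
  refine and_congr_left fun _ => ⟨fun h i => ?_, fun h => ?_⟩
  · exact lt_of_le_of_lt (le_ciSup (f := fun i : Fin n => |w i.castSucc|)
      (Set.finite_range _).bddAbove i) h
  · rcases isEmpty_or_nonempty (Fin n) with hE | hE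
    · simpa using hr
    · obtain ⟨i, hi⟩ := exists_eq_ciSup_of_finite (f := fun i : Fin n => |w i.castSucc|)
      rw [← hi]
      exact h i

/-- Half side lengths of the cube of radius `r`. -/
def halfSide (n : ℕ) (r : ℝ) (i : Fin (n + 1)) : ℝ := if i = Fin.last n then r ^ 2 else r

lemma pCube_eq {n : ℕ} (z₀ : PSpace n) {r : ℝ} (hr : 0 < r) :
    pCube z₀ r = (@WithLp.ofLp 2 (Fin (n + 1) → ℝ)) ⁻¹'
      (Set.univ.pi fun i => Set.Ioo (z₀ i - halfSide n r i) (z₀ i + halfSide n r i)) := by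
  ext z
  simp only [pCube, Set.mem_setOf_eq, pnorm_lt_iff _ hr, Set.mem_preimage, Set.mem_pi,
    Set.mem_univ, true_implies, Fin.forall_fin_succ', halfSide, if_true, Set.mem_Ioo,
    PiLp.sub_apply, (Fin.castSucc_lt_last _).ne, if_false, abs_lt]
  constructor
  · rintro ⟨h1, h2⟩
    exact ⟨fun i => ⟨by linarith [(h1 i).1], by linarith [(h1 i).2]⟩,
      by linarith [h2.1], by linarith [h2.2]⟩
  · rintro ⟨h1, h2⟩
    exact ⟨fun i => ⟨by linarith [(h1 i).1], by linarith [(h1 i).2]⟩,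
      by linarith [h2.1], by linarith [h2.2]⟩

lemma measurableSet_pCube {n : ℕ} (z₀ : PSpace n) {r : ℝ} (hr : 0 < r) :
    MeasurableSet (pCube z₀ r) := by
  rw [pCube_eq z₀ hr]
  exact (PiLp.volume_preserving_ofLp (Fin (n + 1))).measurable
    (MeasurableSet.univ_pi fun i => measurableSet_Ioo)

lemma volume_pCube {n : ℕ} (z₀ : PSpace n) {r : ℝ} (hr : 0 < r) :
    volume (pCube z₀ r) = ENNReal.ofReal (2 ^ (n + 1) * r ^ (n + 2)) := by
  rw [pCube_eq z₀ hr, (PiLp.volume_preserving_ofLp (Fin (n + 1))).measure_preimage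
    (MeasurableSet.univ_pi fun i => measurableSet_Ioo).nullMeasurableSet, Real.volume_pi_Ioo,
    Fin.prod_univ_castSucc]
  simp only [halfSide, if_true, (Fin.castSucc_lt_last _).ne, if_false]
  rw [← ENNReal.ofReal_prod_of_nonneg (fun i _ => by linarith),
    ← ENNReal.ofReal_mul (Finset.prod_nonneg fun i _ => by linarith)]
  congr 1
  have h : ∀ a b : ℝ, a + b - (a - b) = 2 * b := fun a b => by ring
  simp only [h, Finset.prod_const, Finset.card_univ, Fintype.card_fin]
  ring

lemma real_volume_pCube {n : ℕ} (z₀ : PSpace n) {r : ℝ} (hr : 0 < r) :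
    volume.real (pCube z₀ r) = 2 ^ (n + 1) * r ^ (n + 2) := by
  rw [measureReal_def, volume_pCube z₀ hr, ENNReal.toReal_ofReal (by positivity)]

lemma pCube_mono {n : ℕ} (z₀ : PSpace n) {r s : ℝ} (h : r ≤ s) : pCube z₀ r ⊆ pCube z₀ s :=
  fun _ hz => lt_of_lt_of_le hz h

lemma mul_setAverage {n : ℕ} (z₀ : PSpace n) {r : ℝ} (hr : 0 < r) (f : PSpace n → ℝ) :
    volume.real (pCube z₀ r) * (⨍ z in pCube z₀ r, f z) = ∫ z in pCube z₀ r, f z := by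
  rw [setAverage_eq, smul_eq_mul, mul_inv_cancel_left₀]
  rw [real_volume_pCube z₀ hr]; positivity

lemma volume_pCube_ne_top {n : ℕ} (z₀ : PSpace n) {r : ℝ} (hr : 0 < r) :
    volume (pCube z₀ r) ≠ ∞ := by
  rw [volume_pCube z₀ hr]; exact ENNReal.ofReal_ne_top

lemma integrableOn_abs_sub {n : ℕ} (u : SchwartzMap (PSpace n) ℝ) (z₀ : PSpace n) {r : ℝ}
    (hr : 0 < r) (c : ℝ) : IntegrableOn (fun z => |u z - c|) (pCube z₀ r) :=
  (u.integrable.integrableOn.sub (integrableOn_const (volume_pCube_ne_top z₀ hr))).abs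

lemma oscSet_bddAbove {n : ℕ} (u : SchwartzMap (PSpace n) ℝ) :
    BddAbove (oscSet Set.univ (⇑u)) := by
  obtain ⟨M, hM⟩ : ∃ M, ∀ z, ‖u z‖ ≤ M :=
    ⟨_, fun z => by simpa using u.norm_le_seminorm ℝ z⟩
  refine ⟨M + M, ?_⟩
  rintro v ⟨z₀, r, hr, -, rfl⟩
  have hV : 0 < volume.real (pCube z₀ r) := by rw [real_volume_pCube z₀ hr]; positivity
  have avg_le : ∀ (f : PSpace n → ℝ) (A : ℝ), (∀ z, ‖f z‖ ≤ A) →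
      |⨍ z in pCube z₀ r, f z| ≤ A := by
    intro f A hA
    have h1 := norm_setIntegral_le_of_norm_le_const (f := f) (C := A)
      (volume_pCube_ne_top z₀ hr).lt_top (fun z _ => hA z)
    rw [← mul_setAverage z₀ hr, norm_mul, Real.norm_of_nonneg hV.le, mul_comm A] at h1
    exact le_of_mul_le_mul_left h1 hV
  refine (le_abs_self _).trans (avg_le _ _ fun z => ?_)
  rw [Real.norm_eq_abs, abs_abs]
  exact (abs_sub _ _).trans (add_le_add (hM z) (avg_le _ _ hM))

lemma osc_le {n : ℕ} (u : SchwartzMap (PSpace n) ℝ) (z₀ : PSpace n) {r : ℝ} (hr : 0 < r) :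
    ∫ z in pCube z₀ r, |u z - ⨍ w in pCube z₀ r, u w| ≤
      volume.real (pCube z₀ r) * pBMO Set.univ (⇑u) := by
  rw [← mul_setAverage z₀ hr]
  exact mul_le_mul_of_nonneg_left
    (le_csSup (oscSet_bddAbove u) ⟨z₀, r, hr, Set.subset_univ _, rfl⟩) measureReal_nonneg

lemma pBMO_nonneg {n : ℕ} (u : PSpace n → ℝ) : 0 ≤ pBMO Set.univ u := by
  refine Real.sSup_nonneg ?_
  rintro v ⟨z₀, r, hr, -, rfl⟩
  rw [setAverage_eq]
  exact smul_nonneg (by positivity) (integral_nonneg fun z => abs_nonneg _)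

lemma avg_double {n : ℕ} (u : SchwartzMap (PSpace n) ℝ) (z₀ : PSpace n) {r : ℝ} (hr : 0 < r) :
    |⨍ w in pCube z₀ r, u w| ≤
      |⨍ w in pCube z₀ (2 * r), u w| + 2 ^ (n + 2) * pBMO Set.univ (⇑u) := by
  have hr2 : 0 < 2 * r := by positivity
  set b := ⨍ w in pCube z₀ (2 * r), u w with hb
  have hV : 0 < volume.real (pCube z₀ r) := by rw [real_volume_pCube z₀ hr]; positivity
  have hVV : volume.real (pCube z₀ (2 * r)) = 2 ^ (n + 2) * volume.real (pCube z₀ r) := by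
    rw [real_volume_pCube z₀ hr, real_volume_pCube z₀ hr2]; ring
  have h1 := osc_le u z₀ hr2
  rw [← hb, hVV] at h1
  have h2 : ∫ z in pCube z₀ r, |u z - b| ≤ ∫ z in pCube z₀ (2 * r), |u z - b| :=
    setIntegral_mono_set (integrableOn_abs_sub u z₀ hr2 b) (ae_of_all _ fun z => abs_nonneg _)
      (pCube_mono z₀ (by linarith)).eventuallyLE
  have h3 : |∫ z in pCube z₀ r, (u z - b)| ≤ ∫ z in pCube z₀ r, |u z - b| :=
    abs_integral_le_integral_abs
  rw [integral_sub u.integrable.integrableOn (integrableOn_const (volume_pCube_ne_top z₀ hr)),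
    ← mul_setAverage z₀ hr, setIntegral_const, smul_eq_mul, ← mul_sub, abs_mul,
    abs_of_pos hV] at h3
  have h4 : |(⨍ z in pCube z₀ r, u z) - b| ≤ 2 ^ (n + 2) * pBMO Set.univ (⇑u) := by
    refine le_of_mul_le_mul_left ?_ hV
    linarith
  have := abs_sub_abs_le_abs_sub (⨍ z in pCube z₀ r, u z) b
  linarith

lemma avg_iter {n : ℕ} (u : SchwartzMap (PSpace n) ℝ) (z₀ : PSpace n) (k j : ℕ) :
    |⨍ w in pCube z₀ (2 ^ k), u w| ≤
      |⨍ w in pCube z₀ (2 ^ (k + j)), u w| + j * (2 ^ (n + 2) * pBMO Set.univ (⇑u)) := by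
  induction j with
  | zero => simp
  | succ j ih =>
    have h := avg_double u z₀ (r := 2 ^ (k + j)) (by positivity)
    rw [← pow_succ'] at h
    push_cast
    rw [← add_assoc]
    linarith

lemma L2_le_sob {n : ℕ} (m : ℕ) (u : PSpace n → ℝ) :
    L2norm Set.univ u ≤ sobNorm m Set.univ u := by
  have h0 : ∀ (v : PSpace n → ℝ), 0 ≤ L2norm Set.univ v := fun v => ENNReal.toReal_nonneg
  have hu : mixDeriv 0 (0 : Fin n → ℕ) u = u := by
    simp only [mixDeriv, DxPow, Function.iterate_zero, id, Pi.zero_apply]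
    induction List.finRange n with
    | nil => rfl
    | cons a l ih => simpa using ih
  unfold sobNorm
  refine le_trans ?_ (Finset.single_le_sum
    (f := fun p : ℕ × ℕ => ∑ α ∈ Finset.Nat.antidiagonalTuple n p.2,
      L2norm Set.univ (mixDeriv p.1 α u))
    (fun p _ => Finset.sum_nonneg fun α _ => h0 _) (a := (0, 0)) (by simp))
  refine le_trans ?_ (Finset.single_le_sum (f := fun α => L2norm Set.univ (mixDeriv 0 α u))
    (fun α _ => h0 _) (a := (0 : Fin n → ℕ))
    (by simp [Finset.Nat.mem_antidiagonalTuple]))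
  simp only [hu, le_refl]

lemma integral_sq_eq {n : ℕ} (u : SchwartzMap (PSpace n) ℝ) :
    ∫ z, u z ^ 2 = L2norm Set.univ (⇑u) ^ 2 := by
  have h := (u.memLp 2 volume).eLpNorm_eq_integral_rpow_norm (by simp) (by simp)
  have h0 : 0 ≤ ∫ z, u z ^ 2 := integral_nonneg fun z => sq_nonneg _
  simp only [ENNReal.toReal_ofNat, Real.rpow_ofNat, Real.norm_eq_abs, sq_abs] at h
  rw [L2norm, Measure.restrict_univ, h, ENNReal.toReal_ofReal (by positivity),
    ← Real.rpow_natCast, ← Real.rpow_mul h0]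
  norm_num

lemma avg_large {n : ℕ} (u : SchwartzMap (PSpace n) ℝ) (z₀ : PSpace n) (k : ℕ)
    (hk : L2norm Set.univ (⇑u) ≤ 2 ^ k) : |⨍ w in pCube z₀ (2 ^ k), u w| ≤ 1 := by
  have hr : (0 : ℝ) < 2 ^ k := by positivity
  have hV : 0 < volume.real (pCube z₀ (2 ^ k)) := by rw [real_volume_pCube z₀ hr]; positivity
  have hsq : Integrable (fun z => u z ^ 2) := (u.memLp 2 volume).integrable_sq
  have hV2 : L2norm Set.univ (⇑u) ^ 2 ≤ volume.real (pCube z₀ (2 ^ k)) := by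
    rw [real_volume_pCube z₀ hr]
    have h1 : L2norm Set.univ (⇑u) ^ 2 ≤ ((2 : ℝ) ^ k) ^ 2 :=
      pow_le_pow_left₀ ENNReal.toReal_nonneg hk 2
    have h2 : ((2 : ℝ) ^ k) ^ 2 ≤ (2 ^ k) ^ (n + 2) :=
      pow_le_pow_right₀ (one_le_pow₀ (by norm_num)) (by omega)
    have h3 : (1 : ℝ) ≤ 2 ^ (n + 1) := one_le_pow₀ (by norm_num)
    nlinarith
  refine le_of_mul_le_mul_left ?_ hV
  rw [← abs_of_pos hV, ← abs_mul, abs_of_pos hV, mul_setAverage z₀ hr]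
  have hc : IntegrableOn (fun _ : PSpace n => (1 / 2 : ℝ)) (pCube z₀ (2 ^ k)) :=
    integrableOn_const (volume_pCube_ne_top z₀ hr)
  have hs : IntegrableOn (fun z => u z ^ 2 / 2) (pCube z₀ (2 ^ k)) :=
    (hsq.div_const 2).integrableOn
  calc |∫ z in pCube z₀ (2 ^ k), u z| ≤ ∫ z in pCube z₀ (2 ^ k), |u z| :=
        abs_integral_le_integral_abs
    _ ≤ ∫ z in pCube z₀ (2 ^ k), (1 / 2 + u z ^ 2 / 2) := by
        refine setIntegral_mono u.integrable.integrableOn.abs (hc.add hs) fun z => ?_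
        have := sq_nonneg (|u z| - 1)
        have h2 := sq_abs (u z)
        simp only
        nlinarith
    _ = volume.real (pCube z₀ (2 ^ k)) / 2 + (∫ z in pCube z₀ (2 ^ k), u z ^ 2) / 2 := by
        rw [integral_add hc hs, setIntegral_const, integral_div, smul_eq_mul]; ring
    _ ≤ volume.real (pCube z₀ (2 ^ k)) / 2 + (∫ z, u z ^ 2) / 2 := by
        have h := setIntegral_le_integral (s := pCube z₀ (2 ^ k)) hsq
          (ae_of_all _ fun z => sq_nonneg (u z))
        linarith
    _ ≤ volume.real (pCube z₀ (2 ^ k)) * 1 := by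
        rw [integral_sq_eq]; linarith

/-- The pointwise decay of the kernel. -/
lemma phi0_decay {n : ℕ} {ψ₀ : PSpace n → ℝ} (hψ : IsCutoff ψ₀) :
    ∃ A : ℝ, 0 < A ∧ ∀ z, ∃ k : ℕ, pnorm z < 2 ^ k ∧
      ‖phiJ ψ₀ 0 z‖ ≤ A * ((2 : ℝ) ^ k)⁻¹ ^ (n + 3) := by
  have hs : ContDiff ℝ (⊤ : ℕ∞) (fun z => ((ψ₀ z : ℝ) : ℂ)) :=
    Complex.ofRealCLM.contDiff.comp hψ.smooth
  have hc : HasCompactSupport (fun z => ((ψ₀ z : ℝ) : ℂ)) :=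
    hψ.compact_support.comp_left (g := fun x : ℝ => (x : ℂ)) (by simp)
  let F : SchwartzMap (PSpace n) ℂ := 𝓕⁻ (hc.toSchwartzMap hs)
  have hF : ∀ z, phiJ ψ₀ 0 z = F z := by
    intro z
    simp only [F, SchwartzMap.fourierInv_coe]
    rfl
  obtain ⟨A, hA⟩ : ∃ A : ℝ, ∀ z, (1 + ‖z‖) ^ (n + 3) * ‖F z‖ ≤ A :=
    ⟨_, fun z => by
      simpa using SchwartzMap.one_add_le_sup_seminorm_apply (𝕜 := ℝ) (m := (n + 3, 0))
        (k := n + 3) (n := 0) le_rfl le_rfl F z⟩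
  have hA0 : 0 ≤ A := le_trans (by positivity) (hA 0)
  refine ⟨2 ^ (n + 3) * A + 1, by positivity, fun z => ?_⟩
  have hex : ∃ k : ℕ, pnorm z < 2 ^ k := pow_unbounded_of_one_lt _ (by norm_num)
  classical
  refine ⟨Nat.find hex, Nat.find_spec hex, ?_⟩
  rw [hF]
  have hz : ((2 : ℝ) ^ (Nat.find hex)) ≤ 2 * (1 + ‖z‖) := by
    have hnz := norm_nonneg z
    rcases hk : Nat.find hex with _ | k
    · simp; linarith
    · have hlt : ¬ pnorm z < 2 ^ k := Nat.find_min hex (by omega)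
      rw [pow_succ']
      by_contra! hcon
      refine hlt ((pnorm_lt_iff z (by positivity)).2 ?_)
      have hcon' : 1 + ‖z‖ < 2 ^ k := by linarith
      have hi : ∀ i, |z i| ≤ ‖z‖ := fun i => PiLp.norm_apply_le z i
      exact ⟨fun i => by linarith [hi i.castSucc], by nlinarith [hi (Fin.last n)]⟩
  rw [inv_pow, ← div_eq_mul_inv, le_div_iff₀ (by positivity)]
  calc ‖F z‖ * ((2 : ℝ) ^ (Nat.find hex)) ^ (n + 3) ≤ ‖F z‖ * (2 * (1 + ‖z‖)) ^ (n + 3) := by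
        gcongr
    _ = 2 ^ (n + 3) * ((1 + ‖z‖) ^ (n + 3) * ‖F z‖) := by rw [mul_pow]; ring
    _ ≤ 2 ^ (n + 3) * A := by gcongr; exact hA z
    _ ≤ _ := by linarith

lemma pnorm_sub_comm {n : ℕ} (z w : PSpace n) : pnorm (z - w) = pnorm (w - z) := by
  simp [pnorm, abs_sub_comm]

lemma setIntegral_abs_le {n : ℕ} (u : SchwartzMap (PSpace n) ℝ) (z₀ : PSpace n) {r : ℝ}
    (hr : 0 < r) (D : ℝ) (hD : |⨍ w in pCube z₀ r, u w| ≤ D) :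
    ∫ z in pCube z₀ r, |u z| ≤ volume.real (pCube z₀ r) * (pBMO Set.univ (⇑u) + D) := by
  set b := ⨍ w in pCube z₀ r, u w with hb
  have hi := integrableOn_abs_sub u z₀ hr b
  have hc : IntegrableOn (fun _ : PSpace n => |b|) (pCube z₀ r) :=
    integrableOn_const (volume_pCube_ne_top z₀ hr)
  calc ∫ z in pCube z₀ r, |u z| ≤ ∫ z in pCube z₀ r, (|u z - b| + |b|) := by
        refine setIntegral_mono u.integrable.integrableOn.abs (hi.add hc) fun z => ?_
        have := abs_add_le (u z - b) b
        simpa using this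
    _ = (∫ z in pCube z₀ r, |u z - b|) + volume.real (pCube z₀ r) * |b| := by
        rw [integral_add hi hc, setIntegral_const, smul_eq_mul]
    _ ≤ _ := by
        rw [mul_add]
        exact add_le_add (osc_le u z₀ hr) (mul_le_mul_of_nonneg_left hD measureReal_nonneg)

lemma pconv_le {n : ℕ} {φ : PSpace n → ℂ} {A : ℝ} (hA : 0 < A)
    (hφ : ∀ z, ∃ k : ℕ, pnorm z < 2 ^ k ∧ ‖φ z‖ ≤ A * ((2 : ℝ) ^ k)⁻¹ ^ (n + 3))
    (u : SchwartzMap (PSpace n) ℝ) (z : PSpace n) (E : ℝ) (hE : 0 ≤ E)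
    (hu : ∀ k : ℕ, ∫ w in pCube z (2 ^ k), |u w| ≤ volume.real (pCube z (2 ^ k)) * E) :
    ‖pconv φ (⇑u) z‖ ≤ A * 2 ^ (n + 1) * E * 2 := by
  have hpt : ∀ w, ‖φ (z - w) * (u w : ℂ)‖ₑ ≤ ∑' k : ℕ, (pCube z (2 ^ k)).indicator
      (fun w => ENNReal.ofReal (A * ((2 : ℝ) ^ k)⁻¹ ^ (n + 3)) * ‖u w‖ₑ) w := by
    intro w
    obtain ⟨k, hk, hk2⟩ := hφ (z - w)
    refine le_trans ?_ (ENNReal.le_tsum k)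
    have hmem : w ∈ pCube z (2 ^ k) := by
      simpa only [pCube, Set.mem_setOf_eq, pnorm_sub_comm w z] using hk
    rw [Set.indicator_of_mem hmem, enorm_mul]
    gcongr
    · rw [← ofReal_norm]; exact ENNReal.ofReal_le_ofReal hk2
    · rw [← ofReal_norm, ← ofReal_norm, Complex.norm_real]
  have hmeas : Measurable (fun w => ‖u w‖ₑ) := u.continuous.enorm.measurable
  have hterm : ∀ k : ℕ, ∫⁻ w, (pCube z (2 ^ k)).indicator
      (fun w => ENNReal.ofReal (A * ((2 : ℝ) ^ k)⁻¹ ^ (n + 3)) * ‖u w‖ₑ) w ≤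
      ENNReal.ofReal (A * 2 ^ (n + 1) * E * (1 / 2) ^ k) := by
    intro k
    have hr : (0 : ℝ) < 2 ^ k := by positivity
    rw [lintegral_indicator (measurableSet_pCube z hr), lintegral_const_mul _ hmeas,
      ← ofReal_integral_norm_eq_lintegral_enorm u.integrable.integrableOn,
      ← ENNReal.ofReal_mul (by positivity)]
    refine ENNReal.ofReal_le_ofReal ?_
    have h := hu k
    rw [real_volume_pCube z hr] at h
    calc _ ≤ A * ((2 : ℝ) ^ k)⁻¹ ^ (n + 3) * (2 ^ (n + 1) * (2 ^ k) ^ (n + 2) * E) := by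
          gcongr
          exact h
      _ = A * 2 ^ (n + 1) * E * (1 / 2) ^ k := by
          rw [one_div, inv_pow, inv_pow, pow_succ _ (n + 2), mul_inv]
          field_simp
  have hsum : HasSum (fun k : ℕ => A * 2 ^ (n + 1) * E * (1 / 2) ^ k)
      (A * 2 ^ (n + 1) * E * 2) := hasSum_geometric_two.mul_left _
  have hfin : ‖pconv φ (⇑u) z‖ₑ ≤ ENNReal.ofReal (A * 2 ^ (n + 1) * E * 2) := by
    calc ‖pconv φ (⇑u) z‖ₑ ≤ ∫⁻ w, ‖φ (z - w) * (u w : ℂ)‖ₑ :=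
          enorm_integral_le_lintegral_enorm _
      _ ≤ _ := lintegral_mono hpt
      _ = _ := lintegral_tsum fun k =>
          ((hmeas.const_mul _).indicator (measurableSet_pCube z (by positivity))).aemeasurable
      _ ≤ _ := ENNReal.tsum_le_tsum hterm
      _ = _ := by
          rw [← ENNReal.ofReal_tsum_of_nonneg (fun k => by positivity) hsum.summable,
            hsum.tsum_eq]
  rw [← ofReal_norm] at hfin
  exact (ENNReal.ofReal_le_ofReal_iff (by positivity)).1 hfin

lemma exists_scale (W : ℝ) : ∃ K : ℕ, W ≤ 2 ^ K ∧ (K : ℝ) ≤ 2 * logPlus W + 1 := by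
  have hl : 0 ≤ logPlus W := le_max_right _ _
  have hl2 : (0.5 : ℝ) < Real.log 2 := by linarith [Real.log_two_gt_d9]
  refine ⟨⌈logPlus W / Real.log 2⌉₊, ?_, ?_⟩
  · rcases le_or_gt W 0 with hW | hW
    · exact hW.trans (by positivity)
    · rw [← Real.log_le_log_iff hW (by positivity), Real.log_pow]
      have h1 := Nat.le_ceil (logPlus W / Real.log 2)
      rw [div_le_iff₀ (by linarith)] at h1
      exact (le_max_left _ _).trans h1
  · refine (Nat.ceil_lt_add_one (by positivity)).le.trans ?_
    gcongr
    rw [div_le_iff₀ (by linarith)]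
    nlinarith

/-- **Estimate of `‖φ₀ * u‖_∞`** (Lemma 2.12):
`‖φ₀ * u‖_∞ ≤ C (1 + ‖u‖_{BMOₚ} (1 + log⁺ ‖u‖_{W₂^{2m,m}}))`, where `φ₀ = 𝓕⁻¹ ψ₀`. -/
theorem conv_phi0_bound (n m : ℕ) (hn : 1 ≤ n) (hm : 0 < m)
    (hmn : ((n : ℝ) + 2) / 4 < m) (ψ₀ : PSpace n → ℝ) (hψ : IsCutoff ψ₀) :
    ∃ C : ℝ, 0 < C ∧ ∀ u : SchwartzMap (PSpace n) ℝ,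
      (⨆ z, ‖pconv (phiJ ψ₀ 0) (⇑u) z‖) ≤
        C * (1 + pBMO Set.univ ⇑u * (1 + logPlus (sobNorm m Set.univ ⇑u))) := by
  obtain ⟨A, hA, hφ⟩ := phi0_decay hψ
  set L : ℝ := 2 ^ (n + 2) with hL
  have hL1 : 1 ≤ L := one_le_pow₀ (by norm_num)
  refine ⟨A * 2 ^ (n + 1) * 2 * (2 * L), by positivity, fun u => ?_⟩
  obtain ⟨K, hK1, hK2⟩ := exists_scale (sobNorm m Set.univ (⇑u))
  have hB := pBMO_nonneg (⇑u)
  set B := pBMO Set.univ (⇑u) with hBdef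
  set l := logPlus (sobNorm m Set.univ (⇑u)) with hl
  have hl0 : 0 ≤ l := le_max_right _ _
  have havg : ∀ z k, |⨍ w in pCube z (2 ^ k), u w| ≤ 1 + K * (L * B) := by
    intro z k
    refine (avg_iter u z k K).trans ?_
    gcongr
    refine avg_large u z (k + K) ((L2_le_sob m _).trans (hK1.trans ?_))
    exact pow_le_pow_right₀ (by norm_num) (by omega)
  refine ciSup_le fun z => ?_
  refine (pconv_le hA hφ u z (B + (1 + K * (L * B))) (by positivity) fun k =>
    setIntegral_abs_le u z (by positivity) _ (havg z k)).trans ?_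
  have hmain : B + (1 + K * (L * B)) ≤ 2 * L * (1 + B * (1 + l)) := by
    have h1 : K * (L * B) ≤ (2 * l + 1) * (L * B) := by gcongr
    have h2 : B ≤ L * B := le_mul_of_one_le_left hB hL1
    nlinarith
  calc A * 2 ^ (n + 1) * (B + (1 + K * (L * B))) * 2
      = A * 2 ^ (n + 1) * 2 * (B + (1 + K * (L * B))) := by ring
    _ ≤ A * 2 ^ (n + 1) * 2 * (2 * L * (1 + B * (1 + l))) := by gcongr
    _ = _ := by ring

end
end

section
/- Let T > 0, let Ω_T = (0,1) × (0,T) and Ω̂_T = (−1,2) × (0,T), let u be continuous on [0,1] × [0,T] with finite parabolic BMO norm on Ω_T, and let ũ be the reflection extension of u. Set r₀ = min(1/2, (T/2)^{1/2}) and r₁ = r₀/2. Then there exists a universal constant C > 0 (independent of T and u) such that for every parabolic cube Q_r ⊆ Ω̂_T of radius r ≤ r₁, inf_{c ∈ ℝ} (1/|Q_r|) ∫_{Q_r} |ũ − c| ≤ C ‖u‖_{BMOₚ(Ω_T)}. -/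
open MeasureTheory Real
open scoped ENNReal

noncomputable section

/-- The parabolic distance `‖z‖ₚ = max |x| √|t|` from `z = (x,t) ∈ ℝ²` to the origin. -/
def pnorm2 (z : ℝ × ℝ) : ℝ := max |z.1| (Real.sqrt |z.2|)

/-- The parabolic cube of radius `r` centered at `z₀` in `ℝ²`. -/
def pCube2 (z₀ : ℝ × ℝ) (r : ℝ) : Set (ℝ × ℝ) := {z | pnorm2 (z - z₀) < r}

/-- The set of mean oscillations `⨍_Q |u - u_Q|` of `u` over parabolic cubes `Q ⊆ O`. -/
def oscSet2 (O : Set (ℝ × ℝ)) (u : ℝ × ℝ → ℝ) : Set ℝ :=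
  {v | ∃ z₀ r, 0 < r ∧ pCube2 z₀ r ⊆ O ∧
    v = ⨍ z in pCube2 z₀ r, |u z - ⨍ w in pCube2 z₀ r, u w|}

/-- The parabolic BMO norm of `u` over `O ⊆ ℝ²`. -/
def pBMO2 (O : Set (ℝ × ℝ)) (u : ℝ × ℝ → ℝ) : ℝ := sSup (oscSet2 O u)

/-- The domain `Ω_T = (0,1) × (0,T)`. -/
def Omega (T : ℝ) : Set (ℝ × ℝ) := Set.Ioo (0 : ℝ) 1 ×ˢ Set.Ioo (0 : ℝ) T

/-- The domain `Ω̂_T = (-1,2) × (0,T)`. -/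
def OmegaHat (T : ℝ) : Set (ℝ × ℝ) := Set.Ioo (-1 : ℝ) 2 ×ˢ Set.Ioo (0 : ℝ) T

/-- The domain `Ω̃_T = (-1,2) × (-T,2T)`. -/
def OmegaTilde (T : ℝ) : Set (ℝ × ℝ) := Set.Ioo (-1 : ℝ) 2 ×ˢ Set.Ioo (-T) (2 * T)

/-- The spatial reflection extension of `u` from `[0,1]` to `(-1,2)` (in the `x` variable). -/
def extSpace (u : ℝ × ℝ → ℝ) : ℝ × ℝ → ℝ := fun p =>
  if p.1 < 0 then -3 * u (-p.1, p.2) + 4 * u (-p.1 / 2, p.2)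
  else if 1 < p.1 then -3 * u (2 - p.1, p.2) + 4 * u ((3 - p.1) / 2, p.2)
  else u p

/-- The temporal reflection extension from `[0,T]` to `(-T,2T)` (in the `t` variable). -/
def extTime (T : ℝ) (v : ℝ × ℝ → ℝ) : ℝ × ℝ → ℝ := fun p =>
  if p.2 < 0 then v (p.1, -p.2)
  else if T < p.2 then v (p.1, 2 * T - p.2)
  else v p

/-- The reflection extension `ũ` of `u` from `Ω_T` to `Ω̃_T = (-1,2) × (-T,2T)`. -/
def uext (T : ℝ) (u : ℝ × ℝ → ℝ) : ℝ × ℝ → ℝ := extTime T (extSpace u)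

/-- The reflection extension `ũ`, extended by `0` outside `Ω̃_T`. -/
def uextZ (T : ℝ) (u : ℝ × ℝ → ℝ) : ℝ × ℝ → ℝ :=
  (OmegaTilde T).indicator (uext T u)

/-- The partial derivative `u_x`. -/
def Dx2 (u : ℝ × ℝ → ℝ) : ℝ × ℝ → ℝ := fun p => fderiv ℝ u p (1, 0)

/-- The partial derivative `u_t`. -/
def Dt2 (u : ℝ × ℝ → ℝ) : ℝ × ℝ → ℝ := fun p => fderiv ℝ u p (0, 1)

/-- The `L²(O)` norm. -/
def L2norm2 (O : Set (ℝ × ℝ)) (v : ℝ × ℝ → ℝ) : ℝ :=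
  (eLpNorm v 2 (volume.restrict O)).toReal

/-- The parabolic Sobolev norm
`‖u‖_{W₂^{2,1}(O)} = ‖u‖_{L²} + ‖u_x‖_{L²} + ‖u_{xx}‖_{L²} + ‖u_t‖_{L²}`. -/
def W21norm (O : Set (ℝ × ℝ)) (u : ℝ × ℝ → ℝ) : ℝ :=
  L2norm2 O u + L2norm2 O (Dx2 u) + L2norm2 O (Dx2 (Dx2 u)) + L2norm2 O (Dt2 u)

lemma pCube2_eq (z : ℝ × ℝ) {r : ℝ} (hr : 0 < r) :
    pCube2 z r = Set.Ioo (z.1 - r) (z.1 + r) ×ˢ Set.Ioo (z.2 - r ^ 2) (z.2 + r ^ 2) := by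
  ext p
  simp only [pCube2, pnorm2, Set.mem_setOf_eq, Set.mem_prod, Set.mem_Ioo, max_lt_iff,
    Prod.fst_sub, Prod.snd_sub, Real.sqrt_lt' hr, abs_lt]
  constructor
  · rintro ⟨⟨h1, h2⟩, h3, h4⟩
    refine ⟨⟨?_, ?_⟩, ?_, ?_⟩ <;> linarith
  · rintro ⟨⟨h1, h2⟩, h3, h4⟩
    refine ⟨⟨?_, ?_⟩, ?_, ?_⟩ <;> linarith

lemma vol_cube (z : ℝ × ℝ) {r : ℝ} (hr : 0 < r) :
    volume.real (pCube2 z r) = 4 * r ^ 3 := by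
  rw [pCube2_eq z hr, Measure.volume_eq_prod, measureReal_def, Measure.prod_prod,
    Real.volume_Ioo, Real.volume_Ioo, ENNReal.toReal_mul, ENNReal.toReal_ofReal (by linarith),
    ENNReal.toReal_ofReal (by nlinarith)]
  ring

lemma meas_cube (z : ℝ × ℝ) {r : ℝ} (hr : 0 < r) : MeasurableSet (pCube2 z r) := by
  rw [pCube2_eq z hr]; exact measurableSet_Ioo.prod measurableSet_Ioo

/-- oscillation of `u` around the constant `c`, localised to the cube -/
def Gc (u : ℝ × ℝ → ℝ) (z : ℝ × ℝ) (r : ℝ) : ℝ × ℝ → ℝ :=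
  (pCube2 z r).indicator fun p => |u p - ⨍ w in pCube2 z r, u w|

lemma Gc_nonneg (u : ℝ × ℝ → ℝ) (z : ℝ × ℝ) (r : ℝ) (p : ℝ × ℝ) : 0 ≤ Gc u z r p :=
  Set.indicator_nonneg (fun _ _ => abs_nonneg _) _

lemma Gc_int {T : ℝ} {u : ℝ × ℝ → ℝ}
    (hu : ContinuousOn u (Set.Icc (0 : ℝ) 1 ×ˢ Set.Icc (0 : ℝ) T)) {z : ℝ × ℝ} {r : ℝ}
    (hr : 0 < r) (hz : pCube2 z r ⊆ Omega T) : Integrable (Gc u z r) := by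
  have hsub : pCube2 z r ⊆ Set.Icc (0 : ℝ) 1 ×ˢ Set.Icc (0 : ℝ) T :=
    hz.trans (Set.prod_mono Set.Ioo_subset_Icc_self Set.Ioo_subset_Icc_self)
  unfold Gc
  rw [integrable_indicator_iff (meas_cube z hr)]
  refine IntegrableOn.mono_set ?_ hsub
  exact ((hu.sub continuousOn_const).abs).integrableOn_compact (isCompact_Icc.prod isCompact_Icc)

lemma Gc_bound {T : ℝ} {u : ℝ × ℝ → ℝ} (hb : BddAbove (oscSet2 (Omega T) u))
    {z : ℝ × ℝ} {r : ℝ} (hr : 0 < r) (hz : pCube2 z r ⊆ Omega T) :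
    ∫ p, Gc u z r p ≤ 4 * r ^ 3 * pBMO2 (Omega T) u := by
  have h1 : (⨍ p in pCube2 z r, |u p - ⨍ w in pCube2 z r, u w|) ≤ pBMO2 (Omega T) u :=
    le_csSup hb ⟨z, r, hr, hz, rfl⟩
  unfold Gc
  rw [integral_indicator (meas_cube z hr)]
  rw [setAverage_eq, vol_cube z hr, smul_eq_mul] at h1
  rwa [inv_mul_le_iff₀ (by positivity)] at h1

lemma map_aff {a : ℝ} (ha : a ≠ 0) (b : ℝ) :
    Measure.map (fun p : ℝ × ℝ => (a * p.1 + b, p.2)) volume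
      = ENNReal.ofReal |a⁻¹| • (volume : Measure (ℝ × ℝ)) := by
  have h1 : Measure.map (fun x : ℝ => a * x + b) volume
      = ENNReal.ofReal |a⁻¹| • (volume : Measure ℝ) := by
    have : (fun x : ℝ => a * x + b) = (fun x => x + b) ∘ (fun x => a * x) := rfl
    rw [this, ← Measure.map_map (by fun_prop) (by fun_prop), Real.map_volume_mul_left ha,
      Measure.map_smul, map_add_right_eq_self]
  have h2 := Measure.map_prod_map (volume : Measure ℝ) (volume : Measure ℝ)
    (f := fun x : ℝ => a * x + b) (g := id) (by fun_prop) measurable_id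
  rw [h1, Measure.map_id, Measure.prod_smul_left] at h2
  rw [Measure.volume_eq_prod, h2]
  rfl

lemma comp_aff {a : ℝ} (ha : a ≠ 0) (b : ℝ) {G : ℝ × ℝ → ℝ} (hG : Integrable G) :
    Integrable (fun p : ℝ × ℝ => G (a * p.1 + b, p.2)) ∧
      ∫ p : ℝ × ℝ, G (a * p.1 + b, p.2) = |a⁻¹| * ∫ p, G p := by
  have hm : AEMeasurable (fun p : ℝ × ℝ => (a * p.1 + b, p.2)) volume := by fun_prop
  have hI : Integrable G (Measure.map (fun p : ℝ × ℝ => (a * p.1 + b, p.2)) volume) := by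
    rw [map_aff ha]; exact hG.smul_measure ENNReal.ofReal_ne_top
  refine ⟨hI.comp_aemeasurable hm, ?_⟩
  rw [← integral_map hm hI.aestronglyMeasurable, map_aff ha, integral_smul_measure,
    ENNReal.toReal_ofReal (abs_nonneg _), smul_eq_mul]

lemma key {T : ℝ} {u : ℝ × ℝ → ℝ}
    (hu : ContinuousOn u (Set.Icc (0 : ℝ) 1 ×ˢ Set.Icc (0 : ℝ) T))
    (hb : BddAbove (oscSet2 (Omega T) u)) {z₀ z₁ z₂ z₃ : ℝ × ℝ} {r : ℝ} (hr : 0 < r)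
    (h₁ : pCube2 z₁ r ⊆ Omega T) (h₂ : pCube2 z₂ r ⊆ Omega T) (h₃ : pCube2 z₃ r ⊆ Omega T)
    (A B c : ℝ)
    (h : ∀ p ∈ pCube2 z₀ r, p.1 ≠ 0 → p.1 ≠ 1 → |uext T u p - c| ≤
      3 * Gc u z₁ r (-1 * p.1 + A, p.2) + 4 * Gc u z₂ r (-1 / 2 * p.1 + B, p.2) + Gc u z₃ r p) :
    (⨅ c : ℝ, ⨍ p in pCube2 z₀ r, |uext T u p - c|) ≤ 12 * pBMO2 (Omega T) u := by
  have hbdd : BddBelow (Set.range fun c : ℝ => ⨍ p in pCube2 z₀ r, |uext T u p - c|) := by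
    refine ⟨0, ?_⟩
    rintro _ ⟨c, rfl⟩
    simp only [setAverage_eq, smul_eq_mul]
    exact mul_nonneg (inv_nonneg.2 measureReal_nonneg) (integral_nonneg fun _ => abs_nonneg _)
  refine (ciInf_le hbdd c).trans ?_
  obtain ⟨i1, e1⟩ := comp_aff (a := -1) (by norm_num) A (Gc_int hu hr h₁)
  obtain ⟨i2, e2⟩ := comp_aff (a := -1 / 2) (by norm_num) B (Gc_int hu hr h₂)
  have i3 := Gc_int hu hr h₃
  have b1 := Gc_bound hb hr h₁
  have b2 := Gc_bound hb hr h₂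
  have b3 := Gc_bound hb hr h₃
  have iS := ((i1.const_mul 3).add (i2.const_mul 4)).add i3
  have hne : ∀ a : ℝ, ∀ᵐ p : ℝ × ℝ, p.1 ≠ a := by
    intro a
    exact (Measure.quasiMeasurePreserving_fst (μ := (volume : Measure ℝ))
      (ν := (volume : Measure ℝ))).ae (Measure.ae_ne volume a)
  have hle : ∫ p in pCube2 z₀ r, |uext T u p - c| ≤
      ∫ p, (3 * Gc u z₁ r (-1 * p.1 + A, p.2) + 4 * Gc u z₂ r (-1 / 2 * p.1 + B, p.2)
        + Gc u z₃ r p) := by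
    refine le_trans ?_ (setIntegral_le_integral (s := pCube2 z₀ r) iS ?_)
    · refine integral_mono_of_nonneg (Filter.Eventually.of_forall fun _ => abs_nonneg _)
        iS.integrableOn ?_
      filter_upwards [ae_restrict_mem (meas_cube z₀ hr), ae_restrict_of_ae (hne 0),
        ae_restrict_of_ae (hne 1)] with p hp hp0 hp1
      exact h p hp hp0 hp1
    · refine Filter.Eventually.of_forall fun p => ?_
      have := Gc_nonneg u z₁ r (-1 * p.1 + A, p.2)
      have := Gc_nonneg u z₂ r (-1 / 2 * p.1 + B, p.2)
      have := Gc_nonneg u z₃ r p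
      simp only [Pi.zero_apply, Pi.add_apply]
      positivity
  have hs : ∫ p, (3 * Gc u z₁ r (-1 * p.1 + A, p.2) + 4 * Gc u z₂ r (-1 / 2 * p.1 + B, p.2)
        + Gc u z₃ r p) = 3 * (∫ p, Gc u z₁ r p) + 8 * (∫ p, Gc u z₂ r p) + ∫ p, Gc u z₃ r p := by
    have j1 : ∫ p, (3 * Gc u z₁ r (-1 * p.1 + A, p.2) + 4 * Gc u z₂ r (-1 / 2 * p.1 + B, p.2)
        + Gc u z₃ r p) = (∫ p : ℝ × ℝ, (3 * Gc u z₁ r (-1 * p.1 + A, p.2)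
          + 4 * Gc u z₂ r (-1 / 2 * p.1 + B, p.2))) + ∫ p, Gc u z₃ r p :=
      integral_add ((i1.const_mul 3).add (i2.const_mul 4)) i3
    have j2 : ∫ p : ℝ × ℝ, (3 * Gc u z₁ r (-1 * p.1 + A, p.2)
          + 4 * Gc u z₂ r (-1 / 2 * p.1 + B, p.2)) =
        (∫ p : ℝ × ℝ, 3 * Gc u z₁ r (-1 * p.1 + A, p.2)) +
          ∫ p : ℝ × ℝ, 4 * Gc u z₂ r (-1 / 2 * p.1 + B, p.2) :=
      integral_add (i1.const_mul 3) (i2.const_mul 4)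
    rw [j1, j2, integral_const_mul, integral_const_mul, e1, e2]
    norm_num
    ring
  rw [setAverage_eq, vol_cube z₀ hr, smul_eq_mul, inv_mul_le_iff₀ (by positivity)]
  rw [hs] at hle
  linarith

lemma Gc_of_mem {u : ℝ × ℝ → ℝ} {z p : ℝ × ℝ} {r : ℝ} (hr : 0 < r)
    (h1 : z.1 - r < p.1) (h2 : p.1 < z.1 + r) (h3 : z.2 - r ^ 2 < p.2) (h4 : p.2 < z.2 + r ^ 2) :
    Gc u z r p = |u p - ⨍ w in pCube2 z r, u w| := by
  unfold Gc
  rw [Set.indicator_of_mem]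
  rw [pCube2_eq z hr]
  exact ⟨⟨h1, h2⟩, h3, h4⟩

lemma cube_sub {T : ℝ} {z : ℝ × ℝ} {r : ℝ} (hr : 0 < r) (h1 : 0 ≤ z.1 - r) (h2 : z.1 + r ≤ 1)
    (h3 : 0 ≤ z.2 - r ^ 2) (h4 : z.2 + r ^ 2 ≤ T) : pCube2 z r ⊆ Omega T := by
  rw [pCube2_eq z hr]
  exact Set.prod_mono (Set.Ioo_subset_Ioo h1 h2) (Set.Ioo_subset_Ioo h3 h4)

lemma uext_eq {T : ℝ} {u : ℝ × ℝ → ℝ} {p : ℝ × ℝ} (h3 : 0 < p.2) (h4 : p.2 < T) :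
    uext T u p = extSpace u p := by
  simp [uext, extTime, not_lt.2 h3.le, not_lt.2 h4.le]

lemma comb (a b c d : ℝ) : |(-3 * a + 4 * b) - (-3 * c + 4 * d)| ≤ 3 * |a - c| + 4 * |b - d| := by
  rw [show (-3 * a + 4 * b) - (-3 * c + 4 * d) = (-3) * (a - c) + 4 * (b - d) by ring]
  refine (abs_add_le _ _).trans ?_
  simp [abs_mul]

/-- **Estimates on small parabolic cubes in `Ω̂_T = (-1,2) × (0,T)`** (Lemma 3.4): for every
parabolic cube `Q_r ⊆ Ω̂_T` with `r ≤ r₁ = r₀/2`, `r₀ = min(1/2, √(T/2))`,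
`inf_c ⨍_{Q_r} |ũ - c| ≤ C ‖u‖_{BMOₚ(Ω_T)}` with `C` universal. -/
theorem small_cube_estimate_hat : ∃ C : ℝ, 0 < C ∧ ∀ T : ℝ, 0 < T →
    ∀ u : ℝ × ℝ → ℝ, ContinuousOn u (Set.Icc (0 : ℝ) 1 ×ˢ Set.Icc (0 : ℝ) T) →
      BddAbove (oscSet2 (Omega T) u) →
      ∀ (z₀ : ℝ × ℝ) (r : ℝ), 0 < r → r ≤ min (1 / 2) (Real.sqrt (T / 2)) / 2 →
        pCube2 z₀ r ⊆ OmegaHat T →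
        (⨅ c : ℝ, ⨍ p in pCube2 z₀ r, |uext T u p - c|) ≤ C * pBMO2 (Omega T) u := by
  refine ⟨12, by norm_num, ?_⟩
  rintro T hT u hu hb ⟨x, t⟩ r hr hr1 hQ
  have hr4 : r ≤ 1 / 4 := by
    have := min_le_left (1 / 2 : ℝ) (Real.sqrt (T / 2))
    linarith
  have hr2 : 0 < r ^ 2 := by positivity
  have hQ' := hQ
  rw [pCube2_eq _ hr, OmegaHat, Set.prod_subset_prod_iff] at hQ'
  have hx := Set.Ioo_subset_Ioo_iff (by simp; linarith) |>.1 (hQ'.resolve_right (by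
    simp only [Set.Ioo_eq_empty_iff]; rintro (h | h) <;> apply h <;> linarith)).1
  have ht := Set.Ioo_subset_Ioo_iff (by simp; linarith) |>.1 (hQ'.resolve_right (by
    simp only [Set.Ioo_eq_empty_iff]; rintro (h | h) <;> apply h <;> linarith)).2
  obtain ⟨hx1, hx2⟩ := hx
  obtain ⟨ht1, ht2⟩ := ht
  simp only at hx1 hx2 ht1 ht2
  have hmem : ∀ p ∈ pCube2 (x, t) r, x - r < p.1 ∧ p.1 < x + r ∧ t - r ^ 2 < p.2 ∧
      p.2 < t + r ^ 2 := by
    intro p hp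
    rw [pCube2_eq _ hr] at hp
    exact ⟨hp.1.1, hp.1.2, hp.2.1, hp.2.2⟩
  have hnn := Gc_nonneg u
  by_cases hL : x - r < 0
  · by_cases hs : 0 < x + r
    · -- straddling zero
      have hc : pCube2 (r, t) r ⊆ Omega T := cube_sub hr (by simp) (by simp; linarith) ht1 ht2
      refine key hu hb hr hc hc hc 0 0 (⨍ w in pCube2 (r, t) r, u w) ?_
      rintro ⟨y, s⟩ hp hp0 hp1
      obtain ⟨a1, a2, a3, a4⟩ := hmem _ hp
      simp only at a1 a2 a3 a4 hp0 hp1 ⊢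
      rw [uext_eq (by simp; linarith) (by simp; linarith)]
      set m := ⨍ w in pCube2 (r, t) r, u w with hm
      rcases lt_or_gt_of_ne hp0 with h0 | h0
      · rw [Gc_of_mem hr (by simp; linarith) (by simp; linarith) (by simpa) (by simpa),
          Gc_of_mem (p := (-1 / 2 * y + 0, s)) hr (by simp; linarith) (by simp; linarith)
            (by simpa) (by simpa), ← hm]
        have e := comb (u (-1 * y + 0, s)) (u (-1 / 2 * y + 0, s)) m m
        have : extSpace u (y, s) = -3 * u (-1 * y + 0, s) + 4 * u (-1 / 2 * y + 0, s) := by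
          simp only [extSpace, h0, if_true]
          congr 4 <;> ring_nf
        rw [this]
        have := hnn (r, t) r (y, s)
        rw [show -3 * m + 4 * m = m by ring] at e
        linarith
      · have : extSpace u (y, s) = u (y, s) := by
          simp [extSpace, not_lt.2 h0.le]
          intro; linarith
        rw [this, Gc_of_mem (p := (y, s)) hr (by simp; linarith) (by simp; linarith)
          (by simpa) (by simpa), ← hm]
        have := hnn (r, t) r (-1 * y + 0, s)
        have := hnn (r, t) r (-1 / 2 * y + 0, s)
        linarith
    · push Not at hs
      have hc : pCube2 (-x, t) r ⊆ Omega T :=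
        cube_sub hr (by simp; linarith) (by simp; linarith) ht1 ht2
      have hc2 : pCube2 ((-x + r) / 2, t) r ⊆ Omega T :=
        cube_sub hr (by simp; linarith) (by simp; linarith) ht1 ht2
      refine key hu hb hr hc hc2 hc 0 0 (-3 * (⨍ w in pCube2 (-x, t) r, u w)
        + 4 * ⨍ w in pCube2 ((-x + r) / 2, t) r, u w) ?_
      rintro ⟨y, s⟩ hp hp0 hp1
      obtain ⟨a1, a2, a3, a4⟩ := hmem _ hp
      simp only at a1 a2 a3 a4 hp0 hp1 ⊢
      rw [uext_eq (by simp; linarith) (by simp; linarith)]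
      have h0 : y < 0 := by linarith
      rw [Gc_of_mem hr (by simp; linarith) (by simp; linarith) (by simpa) (by simpa),
        Gc_of_mem (p := (-1 / 2 * y + 0, s)) hr (by simp; linarith) (by simp; linarith)
          (by simpa) (by simpa)]
      have e := comb (u (-1 * y + 0, s)) (u (-1 / 2 * y + 0, s))
        (⨍ w in pCube2 (-x, t) r, u w) (⨍ w in pCube2 ((-x + r) / 2, t) r, u w)
      have : extSpace u (y, s) = -3 * u (-1 * y + 0, s) + 4 * u (-1 / 2 * y + 0, s) := by
        simp only [extSpace, h0, if_true]
        congr 4 <;> ring_nf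
      rw [this]
      have := hnn (-x, t) r (y, s)
      linarith
  · push Not at hL
    by_cases hR : 1 < x + r
    · by_cases hs : x - r < 1
      · have hc : pCube2 (1 - r, t) r ⊆ Omega T :=
          cube_sub hr (by simp; linarith) (by simp) ht1 ht2
        refine key hu hb hr hc hc hc 2 (3 / 2) (⨍ w in pCube2 (1 - r, t) r, u w) ?_
        rintro ⟨y, s⟩ hp hp0 hp1
        obtain ⟨a1, a2, a3, a4⟩ := hmem _ hp
        simp only at a1 a2 a3 a4 hp0 hp1 ⊢
        rw [uext_eq (by simp; linarith) (by simp; linarith)]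
        set m := ⨍ w in pCube2 (1 - r, t) r, u w with hm
        have h00 : ¬ y < 0 := by linarith
        rcases lt_or_gt_of_ne hp1 with h0 | h0
        · have : extSpace u (y, s) = u (y, s) := by
            simp [extSpace, h00, not_lt.2 h0.le]
          rw [this, Gc_of_mem (p := (y, s)) hr (by simp; linarith) (by simp; linarith)
            (by simpa) (by simpa), ← hm]
          have := hnn (1 - r, t) r (-1 * y + 2, s)
          have := hnn (1 - r, t) r (-1 / 2 * y + 3 / 2, s)
          linarith
        · rw [Gc_of_mem hr (by simp; linarith) (by simp; linarith) (by simpa) (by simpa),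
            Gc_of_mem (p := (-1 / 2 * y + 3 / 2, s)) hr (by simp; linarith) (by simp; linarith)
              (by simpa) (by simpa), ← hm]
          have e := comb (u (-1 * y + 2, s)) (u (-1 / 2 * y + 3 / 2, s)) m m
          have : extSpace u (y, s) = -3 * u (-1 * y + 2, s) + 4 * u (-1 / 2 * y + 3 / 2, s) := by
            simp only [extSpace, h00, h0, if_true, if_false]
            congr 4 <;> ring_nf
          rw [this]
          have := hnn (1 - r, t) r (y, s)
          rw [show -3 * m + 4 * m = m by ring] at e
          linarith
      · push Not at hs
        have hc : pCube2 (2 - x, t) r ⊆ Omega T :=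
          cube_sub hr (by simp; linarith) (by simp; linarith) ht1 ht2
        have hc2 : pCube2 ((3 - x - r) / 2, t) r ⊆ Omega T :=
          cube_sub hr (by simp; linarith) (by simp; linarith) ht1 ht2
        refine key hu hb hr hc hc2 hc 2 (3 / 2) (-3 * (⨍ w in pCube2 (2 - x, t) r, u w)
          + 4 * ⨍ w in pCube2 ((3 - x - r) / 2, t) r, u w) ?_
        rintro ⟨y, s⟩ hp hp0 hp1
        obtain ⟨a1, a2, a3, a4⟩ := hmem _ hp
        simp only at a1 a2 a3 a4 hp0 hp1 ⊢
        rw [uext_eq (by simp; linarith) (by simp; linarith)]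
        have h00 : ¬ y < 0 := by linarith
        have h0 : 1 < y := by linarith
        rw [Gc_of_mem hr (by simp; linarith) (by simp; linarith) (by simpa) (by simpa),
          Gc_of_mem (p := (-1 / 2 * y + 3 / 2, s)) hr (by simp; linarith) (by simp; linarith)
            (by simpa) (by simpa)]
        have e := comb (u (-1 * y + 2, s)) (u (-1 / 2 * y + 3 / 2, s))
          (⨍ w in pCube2 (2 - x, t) r, u w) (⨍ w in pCube2 ((3 - x - r) / 2, t) r, u w)
        have : extSpace u (y, s) = -3 * u (-1 * y + 2, s) + 4 * u (-1 / 2 * y + 3 / 2, s) := by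
          simp only [extSpace, h00, h0, if_true, if_false]
          congr 4 <;> ring_nf
        rw [this]
        have := hnn (2 - x, t) r (y, s)
        linarith
    · push Not at hR
      have hc : pCube2 (x, t) r ⊆ Omega T := cube_sub hr hL hR ht1 ht2
      refine key hu hb hr hc hc hc 0 0 (⨍ w in pCube2 (x, t) r, u w) ?_
      rintro ⟨y, s⟩ hp hp0 hp1
      obtain ⟨a1, a2, a3, a4⟩ := hmem _ hp
      simp only at a1 a2 a3 a4 hp0 hp1 ⊢
      rw [uext_eq (by simp; linarith) (by simp; linarith)]
      have : extSpace u (y, s) = u (y, s) := by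
        have h1 : ¬ y < 0 := by linarith
        have h2 : ¬ 1 < y := by linarith
        simp [extSpace, h1, h2]
      rw [this, Gc_of_mem (p := (y, s)) hr (by simp; linarith) (by simp; linarith)
        (by simpa) (by simpa)]
      have := hnn (x, t) r (-1 * y + 0, s)
      have := hnn (x, t) r (-1 / 2 * y + 0, s)
      linarith

end
end
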